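/- arXiv:2403.15086 — 2 statements merged into one kernel-verified Lean document; each statement's English description precedes it below -/
import Mathlib

section
/- For integers $r \geq 1$, $m \geq 0$ and real $x$ with $|x|$ sufficiently small, the generating function $G_r(x) = \sum_{k=0}^{\infty} T_{r,k} x^k$ of the alternating sums $T_{r,k} = \sum_{k_1+\cdots+k_{r+1}=k} (-1)^{k_{r+1}} \xi(k_1+1,\ldots,k_r+1;k_{r+1}+1)$ satisfies $G_r(x) = \sum_{l=1}^{\infty} \frac{1}{l}\, \frac{\Gamma(l-x)\Gamma(l+x)}{\Gamma(l)^2}\, \frac{1}{(l+x)^r}$. -/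
open scoped BigOperators
open MeasureTheory

/-- Multiple zeta value for an index given as a list. -/
noncomputable def mzvL (k : List ℕ) : ℝ :=
  ∑' m : {f : Fin k.length → ℕ+ // StrictMono f},
    ∏ i, (1 : ℝ) / (((m.1 i : ℕ+) : ℕ) : ℝ) ^ (k.get i)

/-- Multiple zeta-star value for an index given as a list. -/
noncomputable def zetaStarL (k : List ℕ) : ℝ :=
  ∑' m : {f : Fin k.length → ℕ+ // Monotone f},
    ∏ i, (1 : ℝ) / (((m.1 i : ℕ+) : ℕ) : ℝ) ^ (k.get i)

/-- Riemann zeta at a natural number argument. -/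
noncomputable def rz (s : ℕ) : ℝ := ∑' n : ℕ+, (1 : ℝ) / ((n : ℕ) : ℝ) ^ s

/-- Multiple polylogarithm (single variable). -/
noncomputable def LiL (k : List ℕ) (z : ℝ) : ℝ :=
  ∑' m : {f : Fin k.length → ℕ+ // StrictMono f},
    z ^ (if h : 0 < k.length then ((m.1 ⟨k.length - 1, Nat.sub_lt h Nat.one_pos⟩ : ℕ+) : ℕ) else 0)
      / ∏ i, (((m.1 i : ℕ+) : ℕ) : ℝ) ^ (k.get i)

/-- Arakawa-Kaneko multiple zeta function. -/
noncomputable def xiL (k : List ℕ) (s : ℝ) : ℝ :=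
  (1 / Real.Gamma s) *
    ∫ t in Set.Ioi (0 : ℝ), t ^ (s - 1) / (Real.exp t - 1) * LiL k (1 - Real.exp (-t))

/-- All indices obtained from `k` by filling each box with a comma or a plus. -/
def fills : List ℕ → List (List ℕ)
  | [] => [[]]
  | [a] => [[a]]
  | a :: b :: rest => ((fills (b :: rest)).map (a :: ·)) ++ fills ((a + b) :: rest)
termination_by l => l.length

/-- Interpolated multiple zeta value (t-MZV). -/
noncomputable def zetaT (t : ℝ) (k : List ℕ) : ℝ :=
  ((fills k).map (fun k' => t ^ (k.length - k'.length) * mzvL k')).sum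

/-- t-Arakawa-Kaneko multiple zeta value. -/
noncomputable def xiT (t : ℝ) (k : List ℕ) (s : ℝ) : ℝ :=
  ((fills k).map (fun k' => t ^ (k.length - k'.length) * xiL k' s)).sum

/-!
Mark the exponents `k₁, …, kᵣ` by powers of `x` and `kᵣ₊₁` by powers of `z`; the theorem is the case
`z = -x`. Summing the geometric series in the `kᵢ` and the exponential series in `kᵣ₊₁` turns the
generating function of the Arakawa–Kaneko values into
`∑ B(1 - z, mᵣ) / ((m₁ - x) ⋯ (mᵣ - x))` over `0 < m₁ < ⋯ < mᵣ`, with `B` the Beta function.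

This is the `r`-th iterate, at `M = 0`, of the operator sending `g` to
`M ↦ ∑_{a > M} g(a) / (a - x)`, applied to `M ↦ B(1 - z, M)`. For every `q > 0` the function
`M ↦ B(M + 1 - x, q)` is an eigenfunction with eigenvalue `1 / q`, by the geometric series inside
the Beta integral, while the binomial series there expands `B(1 - z, M)` in the eigenfunctions with
`q = l - z`, `l ≥ 1`. Hence the multiple sum collapses to a single sum over `l`, the `l`-th term
carrying the eigenvalue factor `1 / (l - z) ^ r`.
-/

open ProbabilityTheory (beta beta_pos)
open scoped ENNReal Nat

section Multichoose

theorem factorial_mul_multichoose {R : Type*} [CommRing R] [BinomialRing R] (c : R) (n : ℕ) :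
    (n ! : R) * Ring.multichoose c n = (ascPochhammer R n).eval c := by
  rw [← nsmul_eq_mul, Ring.factorial_nsmul_multichoose_eq_ascPochhammer,
    Polynomial.ascPochhammer_smeval_eq_eval]

variable {c : ℝ}

theorem succ_mul_multichoose_succ (c : ℝ) (n : ℕ) :
    (n + 1) * Ring.multichoose c (n + 1) = (c + n) * Ring.multichoose c n := by
  have h := factorial_mul_multichoose c (n + 1)
  rw [ascPochhammer_succ_eval, ← factorial_mul_multichoose, Nat.factorial_succ] at h
  push_cast at h
  exact mul_left_cancel₀ (Nat.cast_ne_zero.2 n.factorial_ne_zero : (n ! : ℝ) ≠ 0)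
    (by linear_combination h)

theorem multichoose_pos (hc : 0 < c) (n : ℕ) : 0 < Ring.multichoose c n :=
  pos_of_mul_pos_right (factorial_mul_multichoose c n ▸ ascPochhammer_pos n c hc)
    (Nat.cast_nonneg _)

theorem factorial_mul_Gamma_mul_multichoose (hc : 0 < c) (n : ℕ) :
    n ! * Real.Gamma c * Ring.multichoose c n = Real.Gamma (c + n) := by
  induction n with
  | zero => simp
  | succ n ih =>
    push_cast [Nat.factorial_succ]
    rw [← add_assoc, Real.Gamma_add_one (by positivity), ← ih]
    linear_combination n ! * Real.Gamma c * succ_mul_multichoose_succ c n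

theorem div_add_le_multichoose (hc : 0 < c) (n : ℕ) : c / (n + c) ≤ Ring.multichoose c n := by
  induction n with
  | zero => simp [hc.ne']
  | succ n ih =>
    rw [div_le_iff₀ (by positivity)] at ih
    have hsucc := succ_mul_multichoose_succ c n
    have hpos := mul_pos (multichoose_pos hc (n + 1)) hc
    rw [div_le_iff₀ (by positivity)]
    push_cast
    linarith

theorem hasSum_multichoose_mul_pow (c : ℝ) {u : ℝ} (hu : |u| < 1) :
    HasSum (fun n ↦ Ring.multichoose c n * u ^ n) ((1 - u) ^ (-c)) := by
  have h := (Real.one_div_one_sub_rpow_hasFPowerSeriesOnBall_zero c).hasSum (y := u)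
    (by simpa [← NNReal.coe_lt_one, enorm_eq_nnnorm] using hu)
  rw [Real.rpow_neg (by linarith [(abs_lt.1 hu).2]), ← one_div]
  simpa [Ring.multichoose_eq, mul_comm] using h

end Multichoose

section Beta

variable {p q c : ℝ}

theorem beta_comm (p q : ℝ) : beta p q = beta q p := by
  rw [beta, beta, mul_comm, add_comm]

theorem beta_add_one_div (hp : 0 < p) (hq : 0 < q) : beta (p + 1) q / p = beta p (q + 1) / q := by
  rw [beta, beta, Real.Gamma_add_one hp.ne', Real.Gamma_add_one hq.ne', add_right_comm, add_assoc]
  field_simp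

theorem multichoose_mul_beta (hc : 0 < c) (n : ℕ) (q : ℝ) :
    Ring.multichoose c n * beta c q =
      Real.Gamma (c + n) * Real.Gamma q / (n ! * Real.Gamma (c + q)) := by
  rw [beta, ← factorial_mul_Gamma_mul_multichoose hc]
  field_simp

theorem lintegral_rpow_mul_one_sub_rpow (hp : 0 < p) (hq : 0 < q) :
    ∫⁻ u in Set.Ioo (0 : ℝ) 1, ENNReal.ofReal (u ^ (p - 1) * (1 - u) ^ (q - 1)) =
      ENNReal.ofReal (beta p q) := by
  have hpos := beta_pos hp hq
  have h := ProbabilityTheory.lintegral_betaPDF_eq_one hp hq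
  simp_rw [ProbabilityTheory.lintegral_betaPDF, mul_assoc,
    ENNReal.ofReal_mul (one_div_nonneg.2 hpos.le)] at h
  rw [lintegral_const_mul _ (by fun_prop), one_div, ENNReal.ofReal_inv_of_pos hpos, mul_comm] at h
  rw [ENNReal.eq_inv_of_mul_eq_one_left h, inv_inv]

theorem tsum_multichoose_mul_beta (hp : 0 < p) (hq : 0 < q) (hc : 0 < c) :
    ∑' j : ℕ, ENNReal.ofReal (Ring.multichoose c j * beta (p + j) (q + c)) =
      ENNReal.ofReal (beta p q) := by
  -- Insert `1 = (1 - u) ^ c * (1 - u) ^ (-c)` in the Beta integral and expand the second factor.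
  have term_eq (j : ℕ) : ENNReal.ofReal (Ring.multichoose c j * beta (p + j) (q + c)) =
      ∫⁻ u in Set.Ioo (0 : ℝ) 1,
        ENNReal.ofReal (Ring.multichoose c j * u ^ j * (u ^ (p - 1) * (1 - u) ^ (q + c - 1))) := by
    have hm := (multichoose_pos hc j).le
    rw [ENNReal.ofReal_mul hm, ← lintegral_rpow_mul_one_sub_rpow (by positivity) (by positivity),
      ← lintegral_const_mul _ (by fun_prop)]
    refine setLIntegral_congr_fun measurableSet_Ioo fun u hu ↦ ?_
    rw [← ENNReal.ofReal_mul hm, add_sub_right_comm, Real.rpow_add hu.1, Real.rpow_natCast]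
    ring_nf
  simp_rw [term_eq]
  rw [← lintegral_tsum fun j ↦ by fun_prop, ← lintegral_rpow_mul_one_sub_rpow hp hq]
  refine setLIntegral_congr_fun measurableSet_Ioo fun u ⟨hu0, hu1⟩ ↦ ?_
  have hu1' : 0 < 1 - u := sub_pos.2 hu1
  have hsum := (hasSum_multichoose_mul_pow c (abs_lt.2 ⟨by linarith, hu1⟩)).mul_right
    (u ^ (p - 1) * (1 - u) ^ (q + c - 1))
  rw [← ENNReal.ofReal_tsum_of_nonneg (fun j ↦ ?_) hsum.summable, hsum.tsum_eq,
    mul_left_comm, ← Real.rpow_add hu1']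
  · ring_nf
  · have := multichoose_pos hc j
    positivity

theorem tsum_beta_add_one_div (hp : 0 < p) (hq : 0 < q) :
    ∑' j : ℕ, ENNReal.ofReal (beta (p + j + 1) q / (p + j)) = ENNReal.ofReal (beta p q / q) := by
  have h (j : ℕ) : ENNReal.ofReal (beta (p + j + 1) q / (p + j)) =
      ENNReal.ofReal (Ring.multichoose 1 j * beta (p + j) (q + 1)) / ENNReal.ofReal q := by
    rw [beta_add_one_div (by positivity) hq, Ring.multichoose_one, one_mul,
      ENNReal.ofReal_div_of_pos hq]
  rw [ENNReal.ofReal_div_of_pos hq]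
  simp_rw [h, div_eq_mul_inv]
  rw [ENNReal.tsum_mul_right, tsum_multichoose_mul_beta hp hq one_pos]

end Beta
theorem hasSum_of_tsum_ofReal_eq {ι κ : Type*} {f : ι → ℝ} {g : κ → ℝ} (hf : ∀ i, 0 ≤ f i)
    (hg : ∀ k, 0 ≤ g k) (hfin : ∑' i, ENNReal.ofReal (f i) ≠ ∞)
    (h : ∑' i, ENNReal.ofReal (f i) = ∑' k, ENNReal.ofReal (g k)) : HasSum f (∑' k, g k) := by
  have hsum := ENNReal.hasSum_toReal hfin
  rw [← ENNReal.tsum_toReal_eq fun _ ↦ ENNReal.ofReal_ne_top, h,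
    ENNReal.tsum_toReal_eq fun _ ↦ ENNReal.ofReal_ne_top] at hsum
  simpa only [ENNReal.toReal_ofReal (hf _), ENNReal.toReal_ofReal (hg _)] using hsum


/-- The summation range `0 < m₁ < ⋯ < mᵣ` of a multiple zeta value of depth `r`. -/
abbrev IndexChain (r : ℕ) := {m : Fin r → ℕ+ // StrictMono m}

namespace IndexChain

variable {r : ℕ} {x z : ℝ}

/-- The largest index `mᵣ` of a chain, with the convention that it is `0` for the empty chain. -/
def last (m : IndexChain r) : ℕ :=
  if h : 0 < r then m.1 ⟨r - 1, Nat.sub_lt h Nat.one_pos⟩ else 0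

/-- The product `∏ᵢ 1 / (mᵢ - x)`, the generating function in `x ^ (k₁ + ⋯ + kᵣ)` of the products
`∏ᵢ 1 / mᵢ ^ (kᵢ + 1)`. -/
noncomputable def weight (x : ℝ) (m : IndexChain r) : ℝ := ∏ i, 1 / ((m.1 i : ℝ) - x)

theorem last_succ (m : IndexChain (r + 1)) : m.last = m.1 (Fin.last r) := rfl

theorem last_pos (hr : 1 ≤ r) (m : IndexChain r) : 0 < m.last := by
  simp [last, Nat.pos_of_ne_zero (Nat.one_le_iff_ne_zero.1 hr)]

theorem one_le_index (m : IndexChain r) (i : Fin r) : (1 : ℝ) ≤ (m.1 i : ℕ) :=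
  Nat.one_le_cast.2 (m.1 i).pos

theorem weight_pos (hx : x < 1) (m : IndexChain r) : 0 < m.weight x :=
  Finset.prod_pos fun i _ ↦ one_div_pos.2 (by linarith [m.one_le_index i])

theorem strictMono_snoc_iff (f : Fin r → ℕ+) (a : ℕ+) :
    StrictMono (Fin.snoc (α := fun _ ↦ ℕ+) f a) ↔
      ∃ h : StrictMono f, last ⟨f, h⟩ < (a : ℕ) := by
  cases r with
  | zero => simp [last, Subsingleton.strictMono]
  | succ r =>
    simp only [last_succ, PNat.coe_lt_coe, exists_prop]
    rw [Fin.strictMono_iff_lt_succ, Fin.strictMono_iff_lt_succ, Fin.forall_fin_succ']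
    simp only [Fin.succ_castSucc, Fin.snoc_castSucc, Fin.succ_last, Fin.snoc_last]

/-- A chain of length `r + 1` is a chain of length `r` together with its last gap
`mᵣ₊₁ - mᵣ - 1`. -/
def snocEquiv (r : ℕ) : IndexChain r × ℕ ≃ IndexChain (r + 1) where
  toFun p := ⟨Fin.snoc (α := fun _ ↦ ℕ+) p.1.1 (p.1.last + p.2).succPNat,
    (strictMono_snoc_iff _ _).2 ⟨p.1.2, Nat.lt_succ_of_le (Nat.le_add_right _ _)⟩⟩
  invFun m :=
    let init : IndexChain r := ⟨Fin.init m.1, fun _ _ h ↦ m.2 (Fin.castSucc_lt_castSucc_iff.2 h)⟩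
    (init, m.last - init.last - 1)
  left_inv p := by
    have hgap : p.1.last + p.2 + 1 - p.1.last - 1 = p.2 := by omega
    simp only [Fin.init_snoc, last_succ, Fin.snoc_last, Nat.succPNat_coe]
    exact Prod.ext rfl hgap
  right_inv m := by
    have hm : StrictMono (Fin.snoc (α := fun _ ↦ ℕ+) (Fin.init m.1) (m.1 (Fin.last r))) := by
      rw [Fin.snoc_init_self]
      exact m.2
    obtain ⟨hinit, hlt⟩ := (strictMono_snoc_iff _ _).1 hm
    have hlast : (last ⟨Fin.init m.1, hinit⟩ +
        (m.last - last ⟨Fin.init m.1, hinit⟩ - 1)).succPNat = m.1 (Fin.last r) := by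
      rw [last_succ, ← PNat.coe_inj, Nat.succPNat_coe]
      omega
    exact Subtype.ext ((congrArg (Fin.snoc _) hlast).trans (Fin.snoc_init_self m.1))

theorem last_snocEquiv (m : IndexChain r) (j : ℕ) :
    (snocEquiv r (m, j)).last = m.last + j + 1 := by
  simp [snocEquiv, last_succ]

theorem weight_snocEquiv (x : ℝ) (m : IndexChain r) (j : ℕ) :
    (snocEquiv r (m, j)).weight x = m.weight x * (1 / ((m.last + j + 1 : ℕ) - x)) := by
  simp [snocEquiv, weight, Fin.prod_univ_castSucc, mul_comm]

/-- The multiple sum `∑ g(mᵣ) / ((m₁ - x) ⋯ (mᵣ - x))` over the chains `0 < m₁ < ⋯ < mᵣ`. It takes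
values in `ℝ≥0∞` so that sums may be interchanged freely. -/
noncomputable def weightedSum (x : ℝ) (r : ℕ) (g : ℕ → ℝ≥0∞) : ℝ≥0∞ :=
  ∑' m : IndexChain r, ENNReal.ofReal (m.weight x) * g m.last

theorem weightedSum_zero (x : ℝ) (g : ℕ → ℝ≥0∞) : weightedSum x 0 g = g 0 := by
  simp [weightedSum, weight, last, Fintype.card_subtype, Subsingleton.strictMono]

theorem weightedSum_succ (hx : x < 1) (r : ℕ) (g : ℕ → ℝ≥0∞) :
    weightedSum x (r + 1) g = weightedSum x r fun M ↦
      ∑' j : ℕ, ENNReal.ofReal (1 / ((M + j + 1 : ℕ) - x)) * g (M + j + 1) := by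
  simp_rw [weightedSum]
  rw [← (snocEquiv r).tsum_eq, ENNReal.tsum_prod']
  simp_rw [last_snocEquiv, weight_snocEquiv, ENNReal.ofReal_mul (weight_pos hx _).le, mul_assoc,
    ENNReal.tsum_mul_left]

theorem weightedSum_const_mul (x : ℝ) (r : ℕ) (c : ℝ≥0∞) (g : ℕ → ℝ≥0∞) :
    weightedSum x r (fun M ↦ c * g M) = c * weightedSum x r g := by
  simp_rw [weightedSum, mul_left_comm _ c, ENNReal.tsum_mul_left]

theorem weightedSum_tsum {ι : Type*} (x : ℝ) (r : ℕ) (g : ι → ℕ → ℝ≥0∞) :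
    weightedSum x r (fun M ↦ ∑' i, g i M) = ∑' i, weightedSum x r (g i) := by
  simp_rw [weightedSum, ← ENNReal.tsum_mul_left]
  exact ENNReal.tsum_comm

theorem weightedSum_beta_add_one_sub (hx : x < 1) {q : ℝ} (hq : 0 < q) (r : ℕ) :
    weightedSum x r (fun M ↦ ENNReal.ofReal (beta (M + 1 - x) q)) =
      ENNReal.ofReal (1 / q ^ r * beta (1 - x) q) := by
  induction r with
  | zero => simp [weightedSum_zero]
  | succ r ih =>
    have eigen (M : ℕ) : ∑' j : ℕ, ENNReal.ofReal (1 / ((M + j + 1 : ℕ) - x)) *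
        ENNReal.ofReal (beta ((M + j + 1 : ℕ) + 1 - x) q) =
          ENNReal.ofReal (1 / q) * ENNReal.ofReal (beta (M + 1 - x) q) := by
      have hM : 0 < (M : ℝ) + 1 - x := by linarith [M.cast_nonneg (α := ℝ)]
      rw [← ENNReal.ofReal_mul (by positivity), one_div_mul_eq_div, ← tsum_beta_add_one_div hM hq]
      refine tsum_congr fun j ↦ ?_
      have hj : ((M + j + 1 : ℕ) : ℝ) - x = M + 1 - x + j := by push_cast; ring
      rw [add_sub_right_comm, hj, ← ENNReal.ofReal_mul (by positivity), one_div_mul_eq_div]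
    simp_rw [weightedSum_succ hx, eigen]
    rw [weightedSum_const_mul, ih, ← ENNReal.ofReal_mul (by positivity), pow_succ]
    ring_nf

theorem weightedSum_beta_one_sub (hx : x < 1) (hz : z < 1) (hr : 1 ≤ r) :
    weightedSum x r (fun M ↦ ENNReal.ofReal (beta (1 - z) M)) =
      ∑' j : ℕ, ENNReal.ofReal
        (Ring.multichoose (1 - x) j * (1 / (j + 1 - z) ^ r * beta (1 - x) (j + 1 - z))) := by
  have expand (m : IndexChain r) : ENNReal.ofReal (beta (1 - z) m.last) =
      ∑' j : ℕ, ENNReal.ofReal (Ring.multichoose (1 - x) j) *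
        ENNReal.ofReal (beta (m.last + 1 - x) (j + 1 - z)) := by
    rw [← tsum_multichoose_mul_beta (sub_pos.2 hz) (Nat.cast_pos.2 (last_pos hr m))
      (sub_pos.2 hx)]
    refine tsum_congr fun j ↦ ?_
    rw [ENNReal.ofReal_mul (multichoose_pos (sub_pos.2 hx) j).le, beta_comm]
    ring_nf
  have hsum : weightedSum x r (fun M ↦ ENNReal.ofReal (beta (1 - z) M)) =
      weightedSum x r fun M ↦ ∑' j : ℕ, ENNReal.ofReal (Ring.multichoose (1 - x) j) *
        ENNReal.ofReal (beta (M + 1 - x) (j + 1 - z)) :=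
    tsum_congr fun m ↦ congrArg _ (expand m)
  rw [hsum, weightedSum_tsum]
  refine tsum_congr fun j ↦ ?_
  have hj : 0 < (j : ℝ) + 1 - z := by linarith [j.cast_nonneg (α := ℝ)]
  rw [weightedSum_const_mul, weightedSum_beta_add_one_sub hx hj,
    ← ENNReal.ofReal_mul (multichoose_pos (sub_pos.2 hx) j).le]

theorem weightedSum_one_beta_one_sub_ne_top (hx : x < 1) (hz : z < 1) :
    weightedSum x 1 (fun M ↦ ENNReal.ofReal (beta (1 - z) M)) ≠ ∞ := by
  obtain ⟨c, hc, hcx, hcz⟩ : ∃ c, 0 < c ∧ c < 1 - x ∧ c < 1 - z := by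
    simpa using exists_between (lt_min (sub_pos.2 hx) (sub_pos.2 hz))
  have term_le (j : ℕ) : 1 / ((j + 1 : ℕ) - x) * beta (1 - z) (j + 1 : ℕ) ≤
      1 / c * (Ring.multichoose c j * beta (1 + j) (1 - z - c + c)) := by
    have hbeta := (beta_pos (sub_pos.2 hz) (Nat.cast_pos.2 j.succ_pos)).le
    have hcoeff : 1 / ((j + 1 : ℕ) - x) ≤ 1 / c * Ring.multichoose c j := calc
      1 / ((j + 1 : ℕ) - x) ≤ 1 / (j + c) := by
        push_cast
        exact one_div_le_one_div_of_le (by positivity) (by linarith)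
      _ = 1 / c * (c / (j + c)) := by field_simp
      _ ≤ 1 / c * Ring.multichoose c j := by gcongr; exact div_add_le_multichoose hc j
    rw [sub_add_cancel, ← mul_assoc, beta_comm (1 + j), add_comm 1 (j : ℝ)]
    push_cast at hcoeff hbeta ⊢
    gcongr
  refine ne_top_of_le_ne_top (ENNReal.mul_ne_top (ENNReal.ofReal_ne_top (r := 1 / c))
    (ENNReal.ofReal_ne_top (r := beta 1 (1 - z - c)))) ?_
  rw [← tsum_multichoose_mul_beta one_pos (sub_pos.2 hcz) hc, ← ENNReal.tsum_mul_left,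
    weightedSum_succ hx, weightedSum_zero]
  simp only [zero_add]
  refine ENNReal.tsum_le_tsum fun j ↦ ?_
  have hj : 0 < ((j + 1 : ℕ) : ℝ) - x := by push_cast; linarith [j.cast_nonneg (α := ℝ)]
  rw [← ENNReal.ofReal_mul (by positivity), ← ENNReal.ofReal_mul (by positivity)]
  exact ENNReal.ofReal_le_ofReal (term_le j)

theorem weightedSum_beta_one_sub_ne_top (hx : x < 1) (hz : z < 1) (hr : 1 ≤ r) :
    weightedSum x r (fun M ↦ ENNReal.ofReal (beta (1 - z) M)) ≠ ∞ := by
  obtain ⟨r, rfl⟩ := Nat.exists_eq_add_of_le' hr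
  have hz' : 0 < 1 - z := sub_pos.2 hz
  refine ne_top_of_le_ne_top (ENNReal.mul_ne_top (ENNReal.ofReal_ne_top (r := (1 / (1 - z)) ^ r))
    (weightedSum_one_beta_one_sub_ne_top hx hz)) ?_
  rw [weightedSum_beta_one_sub hx hz hr, weightedSum_beta_one_sub hx hz le_rfl,
    ← ENNReal.tsum_mul_left]
  refine ENNReal.tsum_le_tsum fun j ↦ ?_
  rw [← ENNReal.ofReal_mul (pow_nonneg (one_div_nonneg.2 hz'.le) r)]
  have hj : 0 < (j : ℝ) + 1 - z := by linarith [j.cast_nonneg (α := ℝ)]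
  have hcoeff := (multichoose_pos (sub_pos.2 hx) j).le
  have hbeta := (beta_pos (sub_pos.2 hx) hj).le
  refine ENNReal.ofReal_le_ofReal ?_
  calc Ring.multichoose (1 - x) j * (1 / (j + 1 - z) ^ (r + 1) * beta (1 - x) (j + 1 - z))
      = (1 / (j + 1 - z)) ^ r *
          (Ring.multichoose (1 - x) j * (1 / (j + 1 - z) ^ 1 * beta (1 - x) (j + 1 - z))) := by
        rw [one_div_pow, pow_succ]
        field_simp
    _ ≤ (1 / (1 - z)) ^ r *
          (Ring.multichoose (1 - x) j * (1 / (j + 1 - z) ^ 1 * beta (1 - x) (j + 1 - z))) := by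
        gcongr
        linarith [j.cast_nonneg (α := ℝ)]

theorem hasSum_weight_mul_beta (hr : 1 ≤ r) (hx : x < 1) (hz : z < 1) :
    HasSum (fun m : IndexChain r ↦ m.weight x * beta (1 - z) m.last)
      (∑' l : ℕ+, Real.Gamma (l - x) * Real.Gamma (l - z) /
        (Real.Gamma l * Real.Gamma (l + 1 - x - z)) * (1 / (l - z) ^ r)) := by
  have term_eq (j : ℕ) : Real.Gamma ((j + 1 : ℕ) - x) * Real.Gamma ((j + 1 : ℕ) - z) /
      (Real.Gamma (j + 1 : ℕ) * Real.Gamma ((j + 1 : ℕ) + 1 - x - z)) *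
        (1 / ((j + 1 : ℕ) - z) ^ r) =
      Ring.multichoose (1 - x) j * (1 / (j + 1 - z) ^ r * beta (1 - x) (j + 1 - z)) := by
    rw [mul_left_comm, multichoose_mul_beta (sub_pos.2 hx), mul_comm]
    push_cast
    rw [Real.Gamma_nat_eq_factorial]
    ring_nf
  have hweight (m : IndexChain r) : ENNReal.ofReal (m.weight x * beta (1 - z) m.last) =
      ENNReal.ofReal (m.weight x) * ENNReal.ofReal (beta (1 - z) m.last) :=
    ENNReal.ofReal_mul (weight_pos hx m).le
  rw [tsum_pnat_eq_tsum_succ (f := fun l : ℕ ↦ Real.Gamma (l - x) * Real.Gamma (l - z) /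
    (Real.Gamma l * Real.Gamma (l + 1 - x - z)) * (1 / (l - z) ^ r))]
  simp_rw [term_eq]
  refine hasSum_of_tsum_ofReal_eq (fun m ↦ ?_) (fun j ↦ ?_) ?_ ?_
  · have hm : (0 : ℝ) < m.last := Nat.cast_pos.2 (last_pos hr m)
    exact (mul_pos (weight_pos hx m) (beta_pos (sub_pos.2 hz) hm)).le
  · have hj : 0 < (j : ℝ) + 1 - z := by linarith [j.cast_nonneg (α := ℝ)]
    have hcoeff := multichoose_pos (sub_pos.2 hx) j
    have hbeta := beta_pos (sub_pos.2 hx) hj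
    positivity
  · simp_rw [hweight]
    exact weightedSum_beta_one_sub_ne_top hx hz hr
  · simp_rw [hweight]
    exact weightedSum_beta_one_sub hx hz hr

end IndexChain

section ExponentialMoments

theorem hasSum_pow_div_factorial (t : ℝ) : HasSum (fun j : ℕ ↦ t ^ j / j !) (Real.exp t) :=
  Real.exp_eq_exp_ℝ ▸ NormedSpace.expSeries_div_hasSum_exp t

variable {w : ℝ → ℝ}

theorem hasSum_pow_mul_setIntegral_pow_div_factorial (hw : Measurable w) {z : ℝ}
    (hint : IntegrableOn (fun t ↦ Real.exp (|z| * t) * w t) (Set.Ioi 0)) :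
    HasSum (fun j : ℕ ↦ z ^ j * ∫ t in Set.Ioi 0, t ^ j / j ! * w t)
      (∫ t in Set.Ioi 0, Real.exp (z * t) * w t) := by
  have expand (z t y : ℝ) :
      HasSum (fun j : ℕ ↦ z ^ j * (t ^ j / j ! * y)) (Real.exp (z * t) * y) := by
    refine ((hasSum_pow_div_factorial (z * t)).mul_right y).congr_fun fun j ↦ ?_
    ring
  simp_rw [← integral_const_mul]
  refine hasSum_integral_of_dominated_convergence (fun j t ↦ |z| ^ j * (t ^ j / j ! * ‖w t‖))
    (fun j ↦ by fun_prop) (fun j ↦ ?_) (.of_forall fun t ↦ (expand |z| t ‖w t‖).summable) ?_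
    (.of_forall fun t ↦ expand z t (w t))
  · filter_upwards [ae_restrict_mem measurableSet_Ioi] with t (ht : 0 < t)
    rw [norm_mul, norm_mul, norm_pow, Real.norm_eq_abs z,
      Real.norm_of_nonneg (r := _ / _) (by positivity)]
  · simp_rw [(expand |z| _ _).tsum_eq]
    simpa only [norm_mul, Real.norm_eq_abs, Real.abs_exp] using hint.norm

theorem integrableOn_pow_div_factorial_mul (hw : Measurable w) {c : ℝ} (hc : 0 < c)
    (hint : IntegrableOn (fun t ↦ Real.exp (c * t) * w t) (Set.Ioi 0)) (j : ℕ) :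
    IntegrableOn (fun t ↦ t ^ j / j ! * w t) (Set.Ioi 0) := by
  refine (hint.const_mul (c ^ j)⁻¹).mono (by fun_prop) ?_
  filter_upwards [ae_restrict_mem measurableSet_Ioi] with t (ht : 0 < t)
  rw [← mul_assoc, norm_mul, norm_mul]
  gcongr
  rw [Real.norm_of_nonneg (by positivity), Real.norm_of_nonneg (by positivity),
    ← div_eq_inv_mul, le_div_iff₀' (by positivity), ← mul_div_assoc, ← mul_pow]
  exact Real.pow_div_factorial_le_exp _ (by positivity) j

end ExponentialMoments

section XiKernel

/-- The kernel `(1 - e⁻ᵗ) ^ M / (eᵗ - 1)`, through which the `M`-th power series coefficient of the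
multiple polylogarithm enters the integral defining the Arakawa–Kaneko zeta function. -/
noncomputable def xiKernel (M : ℕ) (t : ℝ) : ℝ := (1 - Real.exp (-t)) ^ M / (Real.exp t - 1)

/-- The normalized moment `∫₀^∞ tʲ / j! · (1 - e⁻ᵗ) ^ M / (eᵗ - 1) dt`. -/
noncomputable def xiMoment (j M : ℕ) : ℝ := ∫ t in Set.Ioi 0, t ^ j / j ! * xiKernel M t

theorem xiKernel_nonneg (M : ℕ) {t : ℝ} (ht : 0 < t) : 0 ≤ xiKernel M t :=
  div_nonneg (pow_nonneg (sub_nonneg.2 (Real.exp_le_one_iff.2 (neg_nonpos.2 ht.le))) _)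
    (sub_nonneg.2 (Real.one_le_exp ht.le))

@[fun_prop]
theorem measurable_xiKernel (M : ℕ) : Measurable (xiKernel M) := by
  unfold xiKernel
  fun_prop

theorem xiMoment_nonneg (j M : ℕ) : 0 ≤ xiMoment j M :=
  setIntegral_nonneg measurableSet_Ioi fun t (ht : 0 < t) ↦
    mul_nonneg (by positivity) (xiKernel_nonneg M ht)

theorem image_one_sub_exp_neg_Ioi :
    (fun t : ℝ ↦ 1 - Real.exp (-t)) '' Set.Ioi 0 = Set.Ioo 0 1 := by
  ext u
  constructor
  · rintro ⟨t, ht : 0 < t, rfl⟩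
    simp [ht, Real.exp_pos]
  · rintro ⟨hu0, hu1⟩
    refine ⟨-Real.log (1 - u), ?_, ?_⟩
    · simpa using Real.log_neg (sub_pos.2 hu1) (sub_lt_self 1 hu0)
    · simp [Real.exp_log (sub_pos.2 hu1)]

variable {M : ℕ} {z : ℝ}

theorem exp_mul_xiKernel (hM : 0 < M) {t : ℝ} (ht : 0 < t) :
    Real.exp (z * t) * xiKernel M t = Real.exp (-t) *
      ((1 - Real.exp (-t)) ^ ((M : ℝ) - 1) * (1 - (1 - Real.exp (-t))) ^ (1 - z - 1)) := by
  obtain ⟨n, rfl⟩ := Nat.exists_eq_add_of_le' hM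
  have hpos : 0 < Real.exp t - 1 := sub_pos.2 (Real.one_lt_exp_iff.2 ht)
  have hfactor : 1 - Real.exp (-t) = Real.exp (-t) * (Real.exp t - 1) := by
    rw [mul_sub, ← Real.exp_add]
    simp
  have hexp : (1 - (1 - Real.exp (-t))) ^ (1 - z - 1) = Real.exp (z * t) := by
    rw [sub_sub_cancel, ← Real.exp_mul]
    ring_nf
  rw [hexp, Nat.cast_succ, add_sub_cancel_right, Real.rpow_natCast, xiKernel, pow_succ]
  nth_rw 2 [hfactor]
  field_simp

theorem lintegral_exp_mul_xiKernel (hz : z < 1) (hM : 0 < M) :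
    ∫⁻ t in Set.Ioi 0, ENNReal.ofReal (Real.exp (z * t) * xiKernel M t) =
      ENNReal.ofReal (beta (1 - z) M) := by
  have hderiv (t : ℝ) : HasDerivAt (fun t ↦ 1 - Real.exp (-t)) (Real.exp (-t)) t := by
    simpa using ((hasDerivAt_neg t).exp).const_sub 1
  rw [beta_comm, ← lintegral_rpow_mul_one_sub_rpow (Nat.cast_pos.2 hM) (sub_pos.2 hz),
    ← image_one_sub_exp_neg_Ioi,
    lintegral_image_eq_lintegral_abs_deriv_mul measurableSet_Ioi
      (fun t _ ↦ (hderiv t).hasDerivWithinAt) (fun _ _ _ _ h ↦ by simpa using h)]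
  refine setLIntegral_congr_fun measurableSet_Ioi fun t ht ↦ ?_
  rw [← ENNReal.ofReal_mul (abs_nonneg _), Real.abs_exp, exp_mul_xiKernel hM ht]

theorem ae_exp_mul_xiKernel_nonneg (z : ℝ) (M : ℕ) :
    0 ≤ᵐ[volume.restrict (Set.Ioi 0)] fun t ↦ Real.exp (z * t) * xiKernel M t := by
  filter_upwards [ae_restrict_mem measurableSet_Ioi] with t ht
  exact mul_nonneg (Real.exp_pos _).le (xiKernel_nonneg M ht)

theorem integrableOn_exp_mul_xiKernel (hz : z < 1) (hM : 0 < M) :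
    IntegrableOn (fun t ↦ Real.exp (z * t) * xiKernel M t) (Set.Ioi 0) := by
  refine ⟨by fun_prop, ?_⟩
  rw [hasFiniteIntegral_iff_ofReal (ae_exp_mul_xiKernel_nonneg z M),
    lintegral_exp_mul_xiKernel hz hM]
  exact ENNReal.ofReal_lt_top

theorem integral_exp_mul_xiKernel (hz : z < 1) (hM : 0 < M) :
    ∫ t in Set.Ioi 0, Real.exp (z * t) * xiKernel M t = beta (1 - z) M := by
  rw [integral_eq_lintegral_of_nonneg_ae (ae_exp_mul_xiKernel_nonneg z M) (by fun_prop),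
    lintegral_exp_mul_xiKernel hz hM,
    ENNReal.toReal_ofReal (beta_pos (sub_pos.2 hz) (Nat.cast_pos.2 hM)).le]

theorem integrableOn_pow_div_factorial_mul_xiKernel (j : ℕ) (hM : 0 < M) :
    IntegrableOn (fun t ↦ t ^ j / j ! * xiKernel M t) (Set.Ioi 0) :=
  integrableOn_pow_div_factorial_mul (measurable_xiKernel M) one_half_pos
    (integrableOn_exp_mul_xiKernel one_half_lt_one hM) j

theorem hasSum_pow_mul_xiMoment (hz : |z| < 1) (hM : 0 < M) :
    HasSum (fun j ↦ z ^ j * xiMoment j M) (beta (1 - z) M) := by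
  rw [← integral_exp_mul_xiKernel (lt_of_abs_lt hz) hM]
  exact hasSum_pow_mul_setIntegral_pow_div_factorial (measurable_xiKernel M)
    (integrableOn_exp_mul_xiKernel hz hM)

end XiKernel

section Series

theorem hasSum_pow_div_pow_succ {x y : ℝ} (hxy : |x| < y) :
    HasSum (fun k : ℕ ↦ x ^ k / y ^ (k + 1)) (1 / (y - x)) := by
  have hy : 0 < y := (abs_nonneg x).trans_lt hxy
  have hyx : y - x ≠ 0 := (sub_pos.2 (lt_of_abs_lt hxy)).ne'
  have hratio : |x / y| < 1 := by rwa [abs_div, abs_of_pos hy, div_lt_one hy]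
  have hlimit : 1 / (y - x) = (1 - x / y)⁻¹ * (1 / y) := by field_simp
  rw [hlimit]
  refine ((hasSum_geometric_of_abs_lt_one hratio).mul_right (1 / y)).congr_fun fun k ↦ ?_
  rw [div_pow, pow_succ]
  field_simp

variable {α R : Type*}

theorem summable_norm_prod_apply [NormedCommRing R] {n : ℕ} {a : Fin n → α → R}
    (ha : ∀ i, Summable fun k ↦ ‖a i k‖) :
    Summable fun f : Fin n → α ↦ ‖∏ i, a i (f i)‖ := by
  induction n with
  | zero => exact (hasSum_fintype _).summable
  | succ n ih =>
    rw [← (Fin.consEquiv fun _ ↦ α).summable_iff]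
    simpa [Function.comp_def, Fin.prod_univ_succ] using (ha 0).mul_norm (ih fun i ↦ ha i.succ)

theorem hasSum_prod_apply [NormedCommRing R] [CompleteSpace R] {n : ℕ} {a : Fin n → α → R}
    {s : Fin n → R} (ha : ∀ i, Summable fun k ↦ ‖a i k‖) (hs : ∀ i, HasSum (a i) (s i)) :
    HasSum (fun f : Fin n → α ↦ ∏ i, a i (f i)) (∏ i, s i) := by
  induction n with
  | zero => simp
  | succ n ih =>
    rw [← (Fin.consEquiv fun _ ↦ α).hasSum_iff]
    simpa [Function.comp_def, Fin.prod_univ_succ] using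
      (hs 0).mul (ih (fun i ↦ ha i.succ) fun i ↦ hs i.succ)
        ((ha 0).mul_norm (summable_norm_prod_apply fun i ↦ ha i.succ)).of_norm

theorem hasSum_sum_antidiagonalTuple [AddCommMonoid R] [TopologicalSpace R] [ContinuousAdd R]
    [RegularSpace R] {n : ℕ} {F : (Fin n → ℕ) → R} {s : R} (hF : HasSum F s) :
    HasSum (fun k ↦ ∑ f ∈ Finset.Nat.antidiagonalTuple n k, F f) s := by
  rw [← (Finset.Nat.sigmaAntidiagonalTupleEquivTuple n).hasSum_iff] at hF
  refine hF.sigma fun k ↦ ?_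
  rw [← Finset.sum_coe_sort]
  exact hasSum_fintype _

end Series

section Expansion

variable {r : ℕ} {x z : ℝ}

theorem LiL_ofFn (k : Fin r → ℕ) (z : ℝ) :
    LiL (List.ofFn k) z = ∑' m : IndexChain r, z ^ m.last / ∏ i, (m.1 i : ℝ) ^ k i := by
  have of_length_eq (L : List ℕ) (h : L.length = r) : LiL L z =
      ∑' m : IndexChain r, z ^ m.last / ∏ i, (m.1 i : ℝ) ^ L.get (Fin.cast h.symm i) := by
    subst h
    rfl
  simpa using of_length_eq _ List.length_ofFn

theorem xiMoment_le_pow_mul_beta (s : ℕ) {M : ℕ} (hM : 0 < M) :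
    xiMoment s M ≤ 2 ^ s * beta (1 - 1 / 2) M := by
  have hle := le_hasSum (hasSum_pow_mul_xiMoment (z := 1 / 2) (by norm_num [abs_lt]) hM) s
    fun j _ ↦ mul_nonneg (by positivity) (xiMoment_nonneg j M)
  rwa [one_div_pow, one_div, inv_mul_le_iff₀ (by positivity)] at hle

theorem summable_xiMoment_div_prod (hr : 1 ≤ r) (k : Fin r → ℕ) (s : ℕ) :
    Summable fun m : IndexChain r ↦ xiMoment s m.last / ∏ i, (m.1 i : ℝ) ^ (k i + 1) := by
  have hmajor := (IndexChain.hasSum_weight_mul_beta (z := 1 / 2) hr zero_lt_one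
    one_half_lt_one).summable.mul_left (2 ^ s)
  refine hmajor.of_nonneg_of_le
    (fun m ↦ div_nonneg (xiMoment_nonneg _ _) (by positivity)) fun m ↦ ?_
  have hweight : 1 / ∏ i, (m.1 i : ℝ) ^ (k i + 1) ≤ m.weight 0 := by
    rw [one_div, ← Finset.prod_inv_distrib, IndexChain.weight]
    simp_rw [sub_zero, one_div]
    gcongr with i
    exact le_self_pow₀ (m.one_le_index i) (k i).succ_ne_zero
  rw [div_eq_mul_one_div, mul_left_comm, mul_comm (xiMoment _ _)]
  exact mul_le_mul hweight (xiMoment_le_pow_mul_beta s (m.last_pos hr)) (xiMoment_nonneg _ _)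
    (IndexChain.weight_pos zero_lt_one m).le

theorem hasSum_xiL_ofFn (hr : 1 ≤ r) (k : Fin r → ℕ) (s : ℕ) :
    HasSum (fun m : IndexChain r ↦ xiMoment s m.last / ∏ i, (m.1 i : ℝ) ^ (k i + 1))
      (xiL (List.ofFn fun i ↦ k i + 1) (s + 1)) := by
  have xiL_eq : xiL (List.ofFn fun i ↦ k i + 1) (s + 1) = ∫ t in Set.Ioi 0,
      ∑' m : IndexChain r, t ^ s / s ! * xiKernel m.last t / ∏ i, (m.1 i : ℝ) ^ (k i + 1) := by
    rw [xiL, ← integral_const_mul]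
    refine integral_congr_ae (.of_forall fun t ↦ ?_)
    simp_rw [LiL_ofFn, ← tsum_mul_left, xiKernel, Real.Gamma_nat_eq_factorial,
      add_sub_cancel_right, Real.rpow_natCast]
    exact tsum_congr fun m ↦ by ring
  have hnorm (m : IndexChain r) : ∫ t in Set.Ioi 0,
      ‖t ^ s / s ! * xiKernel m.last t / ∏ i, (m.1 i : ℝ) ^ (k i + 1)‖ =
        xiMoment s m.last / ∏ i, (m.1 i : ℝ) ^ (k i + 1) := by
    rw [xiMoment, ← integral_div]
    refine setIntegral_congr_fun measurableSet_Ioi fun t (ht : 0 < t) ↦ Real.norm_of_nonneg ?_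
    have := xiKernel_nonneg m.last ht
    positivity
  have hint (m : IndexChain r) : IntegrableOn
      (fun t ↦ t ^ s / s ! * xiKernel m.last t / ∏ i, (m.1 i : ℝ) ^ (k i + 1)) (Set.Ioi 0) :=
    (integrableOn_pow_div_factorial_mul_xiKernel s (m.last_pos hr)).div_const _
  have hsummable := summable_xiMoment_div_prod hr k s
  simp_rw [← hnorm] at hsummable
  have hsum := hasSum_integral_of_summable_integral_norm hint hsummable
  simp_rw [integral_div, ← xiL_eq] at hsum
  exact hsum

/-- The contribution of the chain `m` to the monomial `x ^ (k₁ + ⋯ + kᵣ) * z ^ kᵣ₊₁` of the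
generating function, where `p = (kᵣ₊₁, (k₁, …, kᵣ))`. -/
noncomputable def xiTerm (x z : ℝ) (m : IndexChain r) (p : ℕ × (Fin r → ℕ)) : ℝ :=
  z ^ p.1 * xiMoment p.1 m.last * ∏ i, x ^ p.2 i / (m.1 i : ℝ) ^ (p.2 i + 1)

theorem norm_xiTerm (x z : ℝ) (m : IndexChain r) (p : ℕ × (Fin r → ℕ)) :
    ‖xiTerm x z m p‖ = xiTerm |x| |z| m p := by
  simp [xiTerm, abs_of_nonneg (xiMoment_nonneg _ _)]

theorem hasSum_xiTerm (hr : 1 ≤ r) (hx : |x| < 1) (hz : |z| < 1) (m : IndexChain r) :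
    HasSum (xiTerm x z m) (m.weight x * beta (1 - z) m.last) := by
  have geometric {x : ℝ} (hx : |x| < 1) (i : Fin r) :
      HasSum (fun k : ℕ ↦ x ^ k / (m.1 i : ℝ) ^ (k + 1)) (1 / (m.1 i - x)) :=
    hasSum_pow_div_pow_succ (hx.trans_le (m.one_le_index i))
  have hmoment : Summable fun j ↦ ‖z ^ j * xiMoment j m.last‖ := by
    simpa [abs_of_nonneg (xiMoment_nonneg _ _)] using
      (hasSum_pow_mul_xiMoment (z := |z|) (by rwa [abs_abs]) (m.last_pos hr)).summable
  have hfactor (i : Fin r) : Summable fun k : ℕ ↦ ‖x ^ k / (m.1 i : ℝ) ^ (k + 1)‖ := by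
    simpa using (geometric (x := |x|) (by rwa [abs_abs]) i).summable
  have hprod := hasSum_prod_apply hfactor (geometric hx)
  have hsummable := (hmoment.mul_norm (summable_norm_prod_apply hfactor)).of_norm
  have hsum := (hasSum_pow_mul_xiMoment hz (m.last_pos hr)).mul hprod hsummable
  rw [mul_comm]
  exact hsum

theorem summable_xiTerm (hr : 1 ≤ r) (hx : |x| < 1) (hz : |z| < 1) :
    Summable fun q : IndexChain r × (ℕ × (Fin r → ℕ)) ↦ xiTerm x z q.1 q.2 := by
  have hx' : |(|x|)| < 1 := by rwa [abs_abs]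
  have hz' : |(|z|)| < 1 := by rwa [abs_abs]
  refine Summable.of_norm ?_
  simp_rw [norm_xiTerm]
  rw [summable_prod_of_nonneg fun q ↦ norm_xiTerm x z q.1 q.2 ▸ norm_nonneg _]
  refine ⟨fun m ↦ (hasSum_xiTerm hr hx' hz' m).summable, ?_⟩
  simp_rw [(hasSum_xiTerm hr hx' hz' _).tsum_eq]
  exact (IndexChain.hasSum_weight_mul_beta hr hx hz).summable

theorem hasSum_xiTerm_chain (hr : 1 ≤ r) (x z : ℝ) (p : ℕ × (Fin r → ℕ)) :
    HasSum (fun m : IndexChain r ↦ xiTerm x z m p)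
      (x ^ (∑ i, p.2 i) * z ^ p.1 * xiL (List.ofFn fun i ↦ p.2 i + 1) (p.1 + 1)) := by
  refine ((hasSum_xiL_ofFn hr p.2 p.1).mul_left _).congr_fun fun m ↦ ?_
  rw [xiTerm, Finset.prod_div_distrib, Finset.prod_pow_eq_pow_sum]
  ring

theorem hasSum_pow_mul_pow_mul_xiL (hr : 1 ≤ r) (hx : |x| < 1) (hz : |z| < 1) :
    HasSum
      (fun p : ℕ × (Fin r → ℕ) ↦
        x ^ (∑ i, p.2 i) * z ^ p.1 * xiL (List.ofFn fun i ↦ p.2 i + 1) (p.1 + 1))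
      (∑' l : ℕ+, Real.Gamma (l - x) * Real.Gamma (l - z) /
        (Real.Gamma l * Real.Gamma (l + 1 - x - z)) * (1 / (l - z) ^ r)) := by
  obtain ⟨S, hS⟩ := summable_xiTerm (r := r) hr hx hz
  have hS_eq := (hS.prod_fiberwise (hasSum_xiTerm hr hx hz)).unique
    (IndexChain.hasSum_weight_mul_beta hr (lt_of_abs_lt hx) (lt_of_abs_lt hz))
  exact hS_eq ▸ ((Equiv.prodComm _ _).hasSum_iff.2 hS).prod_fiberwise (hasSum_xiTerm_chain hr x z)

end Expansion

theorem stmt8_general {r : ℕ} (hr : 1 ≤ r) {x : ℝ} (hx : |x| < 1) :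
    HasSum
      (fun k : ℕ ↦ (∑ f ∈ Finset.Nat.antidiagonalTuple (r + 1) k,
        (-1 : ℝ) ^ (f (Fin.last r)) *
          xiL (List.ofFn fun i : Fin r => f i.castSucc + 1) ((f (Fin.last r) : ℝ) + 1)) * x ^ k)
      (∑' l : ℕ+, (1 / ((l : ℕ) : ℝ)) *
        (Real.Gamma ((l : ℕ) - x) * Real.Gamma ((l : ℕ) + x) / (Real.Gamma (l : ℕ)) ^ 2) *
          (1 / ((l : ℕ) + x) ^ r)) := by
  have rhs_eq (l : ℕ+) : Real.Gamma (l - x) * Real.Gamma (l - -x) /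
      (Real.Gamma l * Real.Gamma (l + 1 - x - -x)) * (1 / ((l : ℝ) - -x) ^ r) =
      (1 / ((l : ℕ) : ℝ)) * (Real.Gamma (l - x) * Real.Gamma (l + x) / (Real.Gamma l) ^ 2) *
        (1 / ((l : ℕ) + x) ^ r) := by
    have hl : (l : ℝ) ≠ 0 := Nat.cast_ne_zero.2 l.ne_zero
    rw [sub_neg_eq_add, sub_neg_eq_add, sub_add_cancel, Real.Gamma_add_one hl]
    field_simp
  have hsum := hasSum_pow_mul_pow_mul_xiL hr hx (z := -x) (by rwa [abs_neg])
  simp_rw [rhs_eq] at hsum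
  rw [← (Fin.snocEquiv fun _ ↦ ℕ).symm.hasSum_iff] at hsum
  refine (hasSum_sum_antidiagonalTuple hsum).congr_fun fun k ↦ ?_
  rw [Finset.sum_mul]
  refine Finset.sum_congr rfl fun f hf ↦ ?_
  rw [Finset.Nat.mem_antidiagonalTuple, Fin.sum_univ_castSucc] at hf
  change _ = x ^ (∑ i : Fin r, f i.castSucc) * (-x) ^ f (Fin.last r) *
    xiL (List.ofFn fun i : Fin r ↦ f i.castSucc + 1) (f (Fin.last r) + 1)
  rw [← hf, neg_pow, pow_add]
  ring

theorem stmt8 (r m : ℕ) (hr : 1 ≤ r) :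
    ∃ ε > (0 : ℝ), ∀ x : ℝ, |x| < ε →
      ∑' k : ℕ,
          (∑ f ∈ Finset.Nat.antidiagonalTuple (r + 1) k,
            (-1 : ℝ) ^ (f (Fin.last r)) *
              xiL (List.ofFn fun i : Fin r => f i.castSucc + 1) ((f (Fin.last r) : ℝ) + 1))
            * x ^ k =
        ∑' l : ℕ+, (1 / ((l : ℕ) : ℝ)) *
          (Real.Gamma ((l : ℕ) - x) * Real.Gamma ((l : ℕ) + x) / (Real.Gamma (l : ℕ)) ^ 2) *
            (1 / ((l : ℕ) + x) ^ r) :=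
  ⟨1, one_pos, fun _ hx ↦ (stmt8_general hr hx).tsum_eq⟩
end

section
/- For integers $p, q \geq 0$ and real $t$, the height-one interpolated multiple zeta value has the double-integral expression $\zeta^t(\{1\}^p, q+2) = \frac{1}{p!\,q!} \int_{0<u_1<u_2<1} \left(\log\frac{1-u_1}{1-u_2} + t\log\frac{u_2}{u_1}\right)^p \left(\log\frac{1}{u_2}\right)^q \frac{du_1\,du_2}{(1-u_1)u_2}$. -/
open scoped BigOperators
open MeasureTheory

/-!
For `t ≥ 0` both sides are sums of nonnegative terms, so they may be computed in `ℝ≥0∞`. Filling a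
box with a plus merges two neighbouring summation variables, so `ζᵗ` is a sum over chains
`n₁ ≤ ⋯ ≤ n_{p+1}` in which each equality carries the weight `t`; summing over all variables but the
largest gives `∑ₙ H_p(n) n ^ (-(q + 2))`, with `H_p` an interpolated multiple harmonic sum.

On the integral side, the inner logarithm is `Λ(u₂) - Λ(u₁)` for a primitive `Λ` of
`dw / (1 - w) + t dw / w`, so its `p`-th power over `p!` is an iterated integral of this form.
Integrating `w ^ n` against the form from `0` to `v` gives `∑_{m > n} v ^ m / m + t v ^ n / n`,
which is the transpose of the recursion defining `H_p`; the remaining logarithm contributes the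
factor `n ^ (-(q + 1))`, and the same series appears. Finally both sides are polynomials in `t`, so
the identity extends from `t ≥ 0` to all real `t`.
-/

section NestedSums

open Set
open scoped ENNReal

theorem tsum_list_sum_map {ι α : Type*} (l : List α) (f : α → ι → ℝ≥0∞) :
    ∑' i, (l.map fun x ↦ f x i).sum = (l.map fun x ↦ ∑' i, f x i).sum := by
  induction l with
  | nil => simp
  | cons x l ih => simp [ENNReal.tsum_add, ih]

theorem toReal_list_sum_map {α : Type*} (l : List α) (f : α → ℝ≥0∞) (h : (l.map f).sum ≠ ∞) :
    (l.map f).sum.toReal = (l.map fun x ↦ (f x).toReal).sum := by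
  induction l with
  | nil => simp
  | cons x l ih =>
    rw [List.map_cons, List.sum_cons, ENNReal.add_ne_top] at h
    simp [ENNReal.toReal_add h.1 h.2, ih h.2]

/-- The interpolated partial sum `∑_{n < m} c n + T * c m`: the last summand counts with
weight `T`. -/
noncomputable def interpSum {ι : Type*} [Preorder ι] [LocallyFiniteOrderBot ι]
    (T : ℝ≥0∞) (c : ι → ℝ≥0∞) (m : ι) : ℝ≥0∞ :=
  ∑ n ∈ Finset.Iio m, c n + T * c m

/-- The interpolated tail `∑_{m > n} g m + T * g n`, the transpose of `interpSum`. -/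
noncomputable def interpTail {ι : Type*} [Preorder ι]
    (T : ℝ≥0∞) (g : ι → ℝ≥0∞) (n : ι) : ℝ≥0∞ :=
  ∑' m : Ioi n, g m + T * g n

theorem interpTail_zero {ι : Type*} [Preorder ι] (g : ι → ℝ≥0∞) (n : ι) :
    interpTail 0 g n = ∑' m : Ioi n, g m := by
  simp [interpTail]

theorem tsum_mul_interpTail {ι : Type*} [Preorder ι] [LocallyFiniteOrderBot ι]
    (T : ℝ≥0∞) (c g : ι → ℝ≥0∞) :
    ∑' n, c n * interpTail T g n = ∑' m, interpSum T c m * g m := by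
  have hswap : ∑' n, c n * ∑' m : Ioi n, g m = ∑' m, (∑ n ∈ Finset.Iio m, c n) * g m := by
    classical
    simp only [tsum_subtype (Ioi _) g, Finset.sum_mul, ← ENNReal.tsum_mul_left]
    rw [ENNReal.tsum_comm]
    refine tsum_congr fun m ↦ ?_
    rw [sum_eq_tsum_indicator]
    exact tsum_congr fun n ↦ by simp [indicator_apply]
  simp only [interpTail, interpSum, mul_add, add_mul, ENNReal.tsum_add, hswap]
  congr 1
  exact tsum_congr fun n ↦ by ring

/-- The sum over chains `n = n₁ ≤ n₂ ≤ ⋯` of `∏ nᵢ ^ (-kᵢ)`, each equality in the chain being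
weighted by `T`. For the empty list there is no `n₁`, and the value is set to `0`. -/
noncomputable def nestedSum (T : ℝ≥0∞) : List ℕ → ℕ+ → ℝ≥0∞
  | [], _ => 0
  | [a], n => (n : ℝ≥0∞)⁻¹ ^ a
  | a :: b :: l, n => (n : ℝ≥0∞)⁻¹ ^ a * interpTail T (nestedSum T (b :: l)) n

theorem nestedSum_cons (T : ℝ≥0∞) (a : ℕ) {l : List ℕ} (hl : l ≠ []) (n : ℕ+) :
    nestedSum T (a :: l) n = (n : ℝ≥0∞)⁻¹ ^ a * interpTail T (nestedSum T l) n := by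
  obtain ⟨b, l, rfl⟩ := List.exists_cons_of_ne_nil hl
  rfl

theorem nestedSum_add_cons (T : ℝ≥0∞) (a b : ℕ) (l : List ℕ) (n : ℕ+) :
    nestedSum T ((a + b) :: l) n = (n : ℝ≥0∞)⁻¹ ^ a * nestedSum T (b :: l) n := by
  cases l <;> simp only [nestedSum, pow_add, mul_assoc]

theorem ne_nil_of_mem_fills {l : List ℕ} (hl : l ≠ []) : ∀ k ∈ fills l, k ≠ [] := by
  induction l using fills.induct with
  | case1 => exact absurd rfl hl
  | case2 a => simp [fills]
  | case3 a b l _ ih =>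
    simp only [fills, List.mem_append, List.mem_map]
    rintro k (⟨k, _, rfl⟩ | hk)
    · simp
    · exact ih (by simp) k hk

theorem length_le_of_mem_fills (l : List ℕ) : ∀ k ∈ fills l, k.length ≤ l.length := by
  induction l using fills.induct with
  | case1 => simp [fills]
  | case2 a => simp [fills]
  | case3 a b l ihcomma ihplus =>
    simp only [fills, List.mem_append, List.mem_map]
    rintro k (⟨k, hk, rfl⟩ | hk)
    · simpa using ihcomma k hk
    · exact (ihplus k hk).trans (by simp)

theorem sum_fills_nestedSum (T : ℝ≥0∞) (l : List ℕ) (n : ℕ+) :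
    ((fills l).map fun k ↦ T ^ (l.length - k.length) * nestedSum 0 k n).sum =
      nestedSum T l n := by
  induction l using fills.induct generalizing n with
  | case1 => simp [fills, nestedSum]
  | case2 a => simp [fills, nestedSum]
  | case3 a b l ihcomma ihplus =>
    have hcomma : ((fills (b :: l)).map fun k ↦
        T ^ ((a :: b :: l).length - (a :: k).length) * nestedSum 0 (a :: k) n).sum =
          (n : ℝ≥0∞)⁻¹ ^ a * interpTail 0 (nestedSum T (b :: l)) n := by
      simp only [interpTail_zero, ← ihcomma, tsum_list_sum_map, ← List.sum_map_mul_left]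
      refine congrArg List.sum (List.map_congr_left fun k hk ↦ ?_)
      rw [nestedSum_cons 0 a (ne_nil_of_mem_fills (by simp) k hk)]
      simp [interpTail_zero, ENNReal.tsum_mul_left, mul_left_comm]
    have hplus : ((fills ((a + b) :: l)).map fun k ↦
        T ^ ((a :: b :: l).length - k.length) * nestedSum 0 k n).sum =
          (n : ℝ≥0∞)⁻¹ ^ a * (T * nestedSum T (b :: l) n) := by
      rw [mul_left_comm, ← nestedSum_add_cons, ← ihplus, ← List.sum_map_mul_left]
      refine congrArg List.sum (List.map_congr_left fun k hk ↦ ?_)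
      have hlen : (a :: b :: l).length - k.length = ((a + b) :: l).length - k.length + 1 :=
        Nat.sub_add_comm (m := 1) (length_le_of_mem_fills ((a + b) :: l) k hk)
      rw [hlen, pow_succ', mul_assoc]
    simp only [fills, List.map_append, List.sum_append, List.map_map, Function.comp_def, hcomma,
      hplus, nestedSum, ← mul_add]
    simp only [interpTail, zero_mul, add_zero]

/-- The sum of `∏ fᵢ ^ (-kᵢ)` over strictly increasing `f` with values in `S`. -/
noncomputable def strictSum (k : List ℕ) (S : Set ℕ+) : ℝ≥0∞ :=
  ∑' f : {f : Fin k.length → ℕ+ // StrictMono f ∧ ∀ i, f i ∈ S},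
    ∏ i, (f.1 i : ℝ≥0∞)⁻¹ ^ k.get i

/-- A strictly increasing tuple in an upper set `S` is its first entry `n ∈ S` followed by a
strictly increasing tuple above `n`. -/
def strictMonoConsEquiv {α : Type*} [Preorder α] {S : Set α} (hS : IsUpperSet S) (r : ℕ) :
    {f : Fin (r + 1) → α // StrictMono f ∧ ∀ i, f i ∈ S} ≃
      Σ n : S, {f : Fin r → α // StrictMono f ∧ ∀ i, f i ∈ Ioi n.1} where
  toFun f := ⟨⟨f.1 0, f.2.2 0⟩, Fin.tail f.1, f.2.1.comp Fin.strictMono_succ,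
    fun i ↦ f.2.1 i.succ_pos⟩
  invFun f := ⟨Fin.cons f.1.1 f.2.1, Fin.strictMono_cons.2 ⟨f.2.2.2, f.2.2.1⟩,
    Fin.cases f.1.2 fun i ↦ hS (f.2.2.2 i).le f.1.2⟩
  left_inv f := Subtype.ext (Fin.cons_self_tail f.1)
  right_inv _ := rfl

theorem strictSum_nil (S : Set ℕ+) : strictSum [] S = 1 := by
  simp [strictSum, Fintype.card_subtype, Subsingleton.strictMono]

theorem strictSum_cons (a : ℕ) (k : List ℕ) {S : Set ℕ+} (hS : IsUpperSet S) :
    strictSum (a :: k) S = ∑' n : S, (n.1 : ℝ≥0∞)⁻¹ ^ a * strictSum k (Ioi n.1) := by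
  refine ((strictMonoConsEquiv hS k.length).symm.tsum_eq _).symm.trans ?_
  rw [ENNReal.tsum_sigma']
  refine tsum_congr fun n ↦ ?_
  rw [strictSum, ← ENNReal.tsum_mul_left]
  exact tsum_congr fun f ↦ Fin.prod_univ_succ _

theorem nestedSum_zero_cons (a : ℕ) (k : List ℕ) (n : ℕ+) :
    nestedSum 0 (a :: k) n = (n : ℝ≥0∞)⁻¹ ^ a * strictSum k (Ioi n) := by
  induction k generalizing a n with
  | nil => simp [nestedSum, strictSum_nil]
  | cons b k ih => simp [nestedSum, interpTail, strictSum_cons b k (isUpperSet_Ioi n), ih]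

theorem mzvL_eq_toReal_strictSum (k : List ℕ) : mzvL k = (strictSum k univ).toReal := by
  have hmem (f : Fin k.length → ℕ+) : StrictMono f ↔ StrictMono f ∧ ∀ i, f i ∈ univ := by simp
  have hsum : strictSum k univ =
      ∑' f : {f : Fin k.length → ℕ+ // StrictMono f}, ∏ i, (f.1 i : ℝ≥0∞)⁻¹ ^ k.get i :=
    ((Equiv.subtypeEquivRight hmem).tsum_eq fun f ↦ ∏ i, (f.1 i : ℝ≥0∞)⁻¹ ^ k.get i).symm
  rw [hsum, ENNReal.tsum_toReal_eq, mzvL]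
  · exact tsum_congr fun f ↦ by simp [ENNReal.toReal_prod]
  · exact fun f ↦ ENNReal.prod_ne_top fun i _ ↦ ENNReal.pow_ne_top (by simp)

theorem mzvL_eq_toReal_tsum_nestedSum {k : List ℕ} (hk : k ≠ []) :
    mzvL k = (∑' n, nestedSum 0 k n).toReal := by
  obtain ⟨a, k, rfl⟩ := List.exists_cons_of_ne_nil hk
  simp only [mzvL_eq_toReal_strictSum, strictSum_cons a k isUpperSet_univ, nestedSum_zero_cons]
  rw [tsum_univ fun n : ℕ+ ↦ (n : ℝ≥0∞)⁻¹ ^ a * strictSum k (Ioi n)]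

theorem zetaT_eq_toReal_tsum_nestedSum {t : ℝ} (ht : 0 ≤ t) {l : List ℕ} (hl : l ≠ [])
    (hfin : ∑' n, nestedSum (.ofReal t) l n ≠ ∞) :
    zetaT t l = (∑' n, nestedSum (.ofReal t) l n).toReal := by
  simp only [← sum_fills_nestedSum _ l, tsum_list_sum_map, ENNReal.tsum_mul_left] at hfin ⊢
  rw [toReal_list_sum_map _ _ hfin, zetaT]
  refine congrArg List.sum (List.map_congr_left fun k hk ↦ ?_)
  rw [mzvL_eq_toReal_tsum_nestedSum (ne_nil_of_mem_fills hl k hk), ENNReal.toReal_mul,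
    ENNReal.toReal_pow, ENNReal.toReal_ofReal ht]

/-- The interpolated multiple harmonic sum attached to `p` ones: the sum over chains
`n₁ ≤ ⋯ ≤ n_p ≤ m` of `∏ nᵢ⁻¹`, each equality in the chain being weighted by `T`. -/
noncomputable def interpHarmonic (T : ℝ≥0∞) : ℕ → ℕ+ → ℝ≥0∞
  | 0 => 1
  | p + 1 => interpSum T fun n ↦ interpHarmonic T p n * (n : ℝ≥0∞)⁻¹

theorem tsum_interpHarmonic_mul_nestedSum (T : ℝ≥0∞) (j p a : ℕ) :
    ∑' n, interpHarmonic T j n * nestedSum T (List.replicate p 1 ++ [a]) n =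
      ∑' n, interpHarmonic T (j + p) n * (n : ℝ≥0∞)⁻¹ ^ a := by
  induction p generalizing j with
  | zero => rfl
  | succ p ih =>
    rw [List.replicate_succ, List.cons_append]
    simp only [nestedSum_cons T 1 (show List.replicate p 1 ++ [a] ≠ [] by simp), ← mul_assoc,
      pow_one]
    rw [tsum_mul_interpTail, ← add_assoc, Nat.add_right_comm]
    exact ih (j + 1)

theorem tsum_nestedSum_replicate_one (T : ℝ≥0∞) (p a : ℕ) :
    ∑' n, nestedSum T (List.replicate p 1 ++ [a]) n =
      ∑' n, interpHarmonic T p n * (n : ℝ≥0∞)⁻¹ ^ a := by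
  simpa [interpHarmonic] using tsum_interpHarmonic_mul_nestedSum T 0 p a

theorem inv_natCast_pnat_le_one (n : ℕ+) : (n : ℝ≥0∞)⁻¹ ≤ 1 :=
  ENNReal.inv_le_one.2 (Nat.one_le_cast.2 n.pos)

theorem interpHarmonic_le_pow (T : ℝ≥0∞) (p : ℕ) (m : ℕ+) :
    interpHarmonic T p m ≤ (∑ n ∈ Finset.Iio m, (n : ℝ≥0∞)⁻¹ + T) ^ p := by
  induction p generalizing m with
  | zero => simp [interpHarmonic]
  | succ p ih =>
    have hmono {n : ℕ+} (h : n ≤ m) :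
        interpHarmonic T p n ≤ (∑ n ∈ Finset.Iio m, (n : ℝ≥0∞)⁻¹ + T) ^ p :=
      (ih n).trans (by gcongr)
    rw [pow_succ, mul_add, Finset.mul_sum, mul_comm _ T]
    refine add_le_add (Finset.sum_le_sum fun n hn ↦ ?_) ?_
    · gcongr
      exact hmono (Finset.mem_Iio.1 hn).le
    · gcongr
      exact (mul_le_of_le_one_right' (inv_natCast_pnat_le_one m)).trans (hmono le_rfl)

theorem sum_Iio_inv_pnat_le (m : ℕ+) :
    ∑ n ∈ Finset.Iio m, (n : ℝ≥0∞)⁻¹ ≤ .ofReal (1 + Real.log m) := by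
  have hsub : (Finset.Iio m).image PNat.val ⊆ Finset.Icc 1 (m : ℕ) := by
    intro n
    simp only [Finset.mem_image, Finset.mem_Iio, Finset.mem_Icc]
    rintro ⟨n, hn, rfl⟩
    exact ⟨n.pos, hn.le⟩
  calc ∑ n ∈ Finset.Iio m, (n : ℝ≥0∞)⁻¹
      = ∑ n ∈ (Finset.Iio m).image PNat.val, (n : ℝ≥0∞)⁻¹ :=
        (Finset.sum_image (f := fun n : ℕ ↦ (n : ℝ≥0∞)⁻¹) PNat.coe_injective.injOn).symm
    _ ≤ ∑ n ∈ Finset.Icc 1 (m : ℕ), (n : ℝ≥0∞)⁻¹ := Finset.sum_le_sum_of_subset hsub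
    _ = ∑ n ∈ Finset.Icc 1 (m : ℕ), .ofReal (n : ℝ)⁻¹ := by
        refine Finset.sum_congr rfl fun n hn ↦ ?_
        rw [ENNReal.ofReal_inv_of_pos (mod_cast (Finset.mem_Icc.1 hn).1), ENNReal.ofReal_natCast]
    _ = .ofReal (harmonic m) := by
        rw [← ENNReal.ofReal_sum_of_nonneg fun _ _ ↦ by positivity, harmonic_eq_sum_Icc]
        push_cast
        rfl
    _ ≤ .ofReal (1 + Real.log m) := ENNReal.ofReal_le_ofReal (harmonic_le_one_add_log m)

theorem pow_le_mul_exp_half {x : ℝ} (hx : 0 ≤ x) (p : ℕ) :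
    x ^ p ≤ 2 ^ p * p.factorial * Real.exp (x / 2) := by
  have h := Real.pow_div_factorial_le_exp (x / 2) (by positivity) p
  rw [div_le_iff₀ (by positivity), div_pow, div_le_iff₀ (by positivity)] at h
  linarith

theorem interpHarmonic_le_rpow_half {t : ℝ} (ht : 0 ≤ t) (p : ℕ) (m : ℕ+) :
    interpHarmonic (.ofReal t) p m ≤
      .ofReal (2 ^ p * p.factorial * Real.exp ((1 + t) / 2) * (m : ℝ) ^ (1 / 2 : ℝ)) := by
  have hm : (1 : ℝ) ≤ m := Nat.one_le_cast.2 m.pos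
  have := Real.log_nonneg hm
  calc interpHarmonic (.ofReal t) p m
      ≤ (.ofReal (1 + Real.log m) + .ofReal t) ^ p :=
        (interpHarmonic_le_pow _ p m).trans (by gcongr; exact sum_Iio_inv_pnat_le m)
    _ = .ofReal ((1 + Real.log m + t) ^ p) := by
        rw [← ENNReal.ofReal_add (by positivity) ht, ENNReal.ofReal_pow (by positivity)]
    _ ≤ .ofReal (2 ^ p * p.factorial * Real.exp ((1 + Real.log m + t) / 2)) :=
        ENNReal.ofReal_le_ofReal (pow_le_mul_exp_half (by positivity) p)
    _ = _ := by
        rw [Real.rpow_def_of_pos (by positivity), mul_assoc _ (Real.exp _), ← Real.exp_add]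
        ring_nf

theorem tsum_interpHarmonic_mul_inv_pow_ne_top {t : ℝ} (ht : 0 ≤ t) (p : ℕ) {a : ℕ} (ha : 2 ≤ a) :
    ∑' n, interpHarmonic (.ofReal t) p n * (n : ℝ≥0∞)⁻¹ ^ a ≠ ∞ := by
  set C : ℝ := 2 ^ p * p.factorial * Real.exp ((1 + t) / 2)
  have : 0 ≤ C := by positivity
  have hterm (n : ℕ+) : interpHarmonic (.ofReal t) p n * (n : ℝ≥0∞)⁻¹ ^ a ≤
      .ofReal (C * (1 / (n : ℝ) ^ (3 / 2 : ℝ))) := by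
    have hn : (0 : ℝ) < n := mod_cast n.pos
    calc interpHarmonic (.ofReal t) p n * (n : ℝ≥0∞)⁻¹ ^ a
        ≤ .ofReal (C * (n : ℝ) ^ (1 / 2 : ℝ)) * (n : ℝ≥0∞)⁻¹ ^ 2 :=
          mul_le_mul' (interpHarmonic_le_rpow_half ht p n)
            (pow_le_pow_right_of_le_one' (inv_natCast_pnat_le_one n) ha)
      _ = .ofReal (C * (n : ℝ) ^ (1 / 2 : ℝ) * (n : ℝ)⁻¹ ^ 2) := by
          rw [ENNReal.ofReal_mul (q := _ ^ 2) (by positivity), ENNReal.ofReal_pow (by positivity),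
            ENNReal.ofReal_inv_of_pos hn, ENNReal.ofReal_natCast]
      _ = .ofReal (C * (1 / (n : ℝ) ^ (3 / 2 : ℝ))) := by
          rw [mul_assoc, inv_pow, ← Real.rpow_natCast, ← Real.rpow_neg hn.le, ← Real.rpow_add hn,
            one_div ((n : ℝ) ^ _), ← Real.rpow_neg hn.le]
          norm_num
  have hsum : Summable fun n : ℕ+ ↦ C * (1 / (n : ℝ) ^ (3 / 2 : ℝ)) :=
    ((Real.summable_one_div_nat_rpow.2 (by norm_num)).comp_injective PNat.coe_injective).mul_left C
  exact ne_top_of_le_ne_top hsum.tsum_ofReal_ne_top (ENNReal.tsum_le_tsum hterm)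

end NestedSums

section IteratedIntegrals

open Set
open scoped ENNReal

theorem lintegral_Ioo_eq_sub_of_hasDerivAt {F f : ℝ → ℝ} {a b : ℝ} (hab : a ≤ b)
    (hcont : ContinuousOn F (Icc a b)) (hderiv : ∀ x ∈ Ioo a b, HasDerivAt F (f x) x)
    (hf : ∀ x ∈ Ioo a b, 0 ≤ f x) :
    ∫⁻ x in Ioo a b, .ofReal (f x) = .ofReal (F b - F a) := by
  have hint : IntegrableOn f (Ioc a b) :=
    intervalIntegral.integrableOn_deriv_of_nonneg hcont hderiv hf
  rw [← intervalIntegral.integral_eq_sub_of_hasDerivAt_of_le hab hcont hderiv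
      ((intervalIntegrable_iff_integrableOn_Ioc_of_le hab).2 hint),
    intervalIntegral.integral_of_le hab, integral_Ioc_eq_integral_Ioo,
    ofReal_integral_eq_lintegral_ofReal (hint.mono_set Ioo_subset_Ioc_self)
      (ae_restrict_of_forall_mem measurableSet_Ioo hf)]

theorem lintegral_Ioo_mul_pow_sub_div_factorial {F f : ℝ → ℝ} {a b : ℝ} (hab : a ≤ b)
    (hcont : ContinuousOn F (Icc a b)) (hderiv : ∀ x ∈ Ioo a b, HasDerivAt F (f x) x)
    (hf : ∀ x ∈ Ioo a b, 0 ≤ f x) (p : ℕ) :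
    ∫⁻ x in Ioo a b, .ofReal (f x) * .ofReal ((F x - F a) ^ p / p.factorial) =
      .ofReal ((F b - F a) ^ (p + 1) / (p + 1).factorial) := by
  have hmono : MonotoneOn F (Icc a b) :=
    monotoneOn_of_hasDerivWithinAt_nonneg (f' := f) (convex_Icc a b) hcont
      (fun x hx ↦ (hderiv x (interior_Icc (a := a) ▸ hx)).hasDerivWithinAt)
      fun x hx ↦ hf x (interior_Icc (a := a) ▸ hx)
  have hderivpow (x : ℝ) (hx : x ∈ Ioo a b) :
      HasDerivAt (fun x ↦ (F x - F a) ^ (p + 1) / (p + 1).factorial)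
        (f x * ((F x - F a) ^ p / p.factorial)) x := by
    convert! (((hderiv x hx).sub_const (F a)).pow (p + 1)).div_const _ using 1
    rw [Nat.factorial_succ, Nat.cast_mul, Nat.add_sub_cancel]
    field
  have hnonneg (x : ℝ) (hx : x ∈ Ioo a b) : 0 ≤ f x * ((F x - F a) ^ p / p.factorial) := by
    have := hf x hx
    have : 0 ≤ F x - F a :=
      sub_nonneg.2 (hmono (left_mem_Icc.2 hab) (Ioo_subset_Icc_self hx) hx.1.le)
    positivity
  rw [setLIntegral_congr_fun measurableSet_Ioo fun x hx ↦ (ENNReal.ofReal_mul (hf x hx)).symm,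
    lintegral_Ioo_eq_sub_of_hasDerivAt hab (by fun_prop) hderivpow hnonneg]
  simp

/-- The open triangle `a < u < w < b` in the plane. -/
def openTriangle (a b : ℝ) : Set (ℝ × ℝ) := {z | a < z.1 ∧ z.1 < z.2 ∧ z.2 < b}

theorem measurableSet_openTriangle (a b : ℝ) : MeasurableSet (openTriangle a b) :=
  (measurableSet_lt measurable_const measurable_fst).inter <|
    (measurableSet_lt measurable_fst measurable_snd).inter <|
      measurableSet_lt measurable_snd measurable_const

theorem lintegral_openTriangle {f : ℝ × ℝ → ℝ≥0∞} (hf : Measurable f) (a b : ℝ) :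
    ∫⁻ z in openTriangle a b, f z = ∫⁻ u in Ioo a b, ∫⁻ w in Ioo u b, f (u, w) := by
  have hT := measurableSet_openTriangle a b
  rw [← lintegral_indicator hT, Measure.volume_eq_prod,
    lintegral_prod _ (hf.indicator hT).aemeasurable, ← lintegral_indicator measurableSet_Ioo]
  refine lintegral_congr fun u ↦ ?_
  by_cases hu : u ∈ Ioo a b
  · rw [indicator_of_mem hu, ← lintegral_indicator measurableSet_Ioo]
    exact lintegral_congr fun w ↦ by simp [indicator_apply, openTriangle, hu.1]
  · rw [indicator_of_notMem hu]
    exact (lintegral_congr fun w ↦ indicator_of_notMem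
      (fun h ↦ hu ⟨h.1, h.2.1.trans h.2.2⟩) f).trans lintegral_zero

theorem lintegral_openTriangle_symm {f : ℝ × ℝ → ℝ≥0∞} (hf : Measurable f) (a b : ℝ) :
    ∫⁻ z in openTriangle a b, f z = ∫⁻ w in Ioo a b, ∫⁻ u in Ioo a w, f (u, w) := by
  have hT := measurableSet_openTriangle a b
  rw [← lintegral_indicator hT, Measure.volume_eq_prod,
    lintegral_prod_symm _ (hf.indicator hT).aemeasurable, ← lintegral_indicator measurableSet_Ioo]
  refine lintegral_congr fun w ↦ ?_
  by_cases hw : w ∈ Ioo a b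
  · rw [indicator_of_mem hw, ← lintegral_indicator measurableSet_Ioo]
    exact lintegral_congr fun u ↦ by simp [indicator_apply, openTriangle, hw.2]
  · rw [indicator_of_notMem hw]
    exact (lintegral_congr fun u ↦ indicator_of_notMem
      (fun h ↦ hw ⟨h.1.trans h.2.1, h.2.2⟩) f).trans lintegral_zero

theorem lintegral_mul_pow_sub_succ {F f : ℝ → ℝ} {g : ℝ → ℝ≥0∞} (hFm : Measurable F)
    (hfm : Measurable f) (hg : Measurable g) {a v : ℝ}
    (hderiv : ∀ x ∈ Ioc a v, HasDerivAt F (f x) x) (hf : ∀ x ∈ Ioo a v, 0 ≤ f x) (p : ℕ) :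
    ∫⁻ u in Ioo a v, g u * .ofReal ((F v - F u) ^ (p + 1) / (p + 1).factorial) =
      ∫⁻ w in Ioo a v, .ofReal (f w) *
        ∫⁻ u in Ioo a w, g u * .ofReal ((F w - F u) ^ p / p.factorial) := by
  set K : ℝ × ℝ → ℝ≥0∞ := fun z ↦
    g z.1 * (.ofReal (f z.2) * .ofReal ((F z.2 - F z.1) ^ p / p.factorial)) with hK
  have hKm : Measurable K := by fun_prop
  calc ∫⁻ u in Ioo a v, g u * .ofReal ((F v - F u) ^ (p + 1) / (p + 1).factorial)
      = ∫⁻ u in Ioo a v, ∫⁻ w in Ioo u v, K (u, w) := by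
        refine setLIntegral_congr_fun measurableSet_Ioo fun u hu ↦ ?_
        have hsub : Icc u v ⊆ Ioc a v := fun x hx ↦ ⟨hu.1.trans_le hx.1, hx.2⟩
        simp only [hK]
        rw [lintegral_const_mul _ (by fun_prop), lintegral_Ioo_mul_pow_sub_div_factorial hu.2.le
          (fun x hx ↦ (hderiv x (hsub hx)).continuousAt.continuousWithinAt)
          (fun x hx ↦ hderiv x (hsub (Ioo_subset_Icc_self hx)))
          (fun x hx ↦ hf x ⟨hu.1.trans hx.1, hx.2⟩)]
    _ = ∫⁻ w in Ioo a v, ∫⁻ u in Ioo a w, K (u, w) := by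
        rw [← lintegral_openTriangle hKm, lintegral_openTriangle_symm hKm]
    _ = _ := by
        refine setLIntegral_congr_fun measurableSet_Ioo fun w _ ↦ ?_
        simp only [hK, mul_left_comm (g _)]
        rw [lintegral_const_mul _ (by fun_prop)]

theorem tsum_pnat_add_eq_tsum_Ioi (f : ℕ+ → ℝ≥0∞) (n : ℕ+) :
    ∑' k, f (n + k) = ∑' m : Ioi n, f m := by
  rw [tsum_subtype (Ioi n) f, ← (add_right_injective n).tsum_eq (f := (Ioi n).indicator f)]
  · exact tsum_congr fun k ↦ (indicator_of_mem (mem_Ioi.2 (PNat.lt_add_right n k)) f).symm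
  · exact fun m hm ↦ ⟨m - n, PNat.add_sub_of_lt (mem_Ioi.1 (mem_of_indicator_ne_zero hm))⟩

theorem ofReal_inv_one_sub_eq_tsum {w : ℝ} (h0 : 0 < w) (h1 : w < 1) :
    ENNReal.ofReal (1 - w)⁻¹ = ∑' k : ℕ+, .ofReal (w⁻¹ * w ^ (k : ℕ)) := by
  have hsum := hasSum_geometric_of_lt_one h0.le h1
  rw [tsum_pnat_eq_tsum_succ (f := fun k ↦ ENNReal.ofReal (w⁻¹ * w ^ k)), ← hsum.tsum_eq,
    ENNReal.ofReal_tsum_of_nonneg (fun _ ↦ by positivity) hsum.summable]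
  exact tsum_congr fun k ↦ by rw [pow_succ', inv_mul_cancel_left₀ h0.ne']

theorem lintegral_Ioo_zero_inv_mul_pow (n : ℕ+) {v : ℝ} (hv : 0 ≤ v) :
    ∫⁻ w in Ioo 0 v, .ofReal (w⁻¹ * w ^ (n : ℕ)) = (n : ℝ≥0∞)⁻¹ * .ofReal (v ^ (n : ℕ)) := by
  have hn : (0 : ℝ) < n := mod_cast n.pos
  rw [lintegral_Ioo_eq_sub_of_hasDerivAt (F := fun w ↦ (n : ℝ)⁻¹ * w ^ (n : ℕ)) hv (by fun_prop)]
  · simp [ENNReal.ofReal_mul, ENNReal.ofReal_inv_of_pos hn]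
  · intro w hw
    convert! (hasDerivAt_pow (n : ℕ) w).const_mul (n : ℝ)⁻¹ using 1
    rw [inv_mul_cancel_left₀ hn.ne', inv_mul_eq_iff_eq_mul₀ hw.1.ne', mul_pow_sub_one n.ne_zero]
  · intro w hw
    have := hw.1
    positivity

theorem lintegral_Ioo_zero_inv_one_sub {v : ℝ} (h0 : 0 ≤ v) (h1 : v ≤ 1) :
    ∫⁻ w in Ioo 0 v, .ofReal (1 - w)⁻¹ = ∑' m : ℕ+, (m : ℝ≥0∞)⁻¹ * .ofReal (v ^ (m : ℕ)) := by
  rw [setLIntegral_congr_fun measurableSet_Ioo fun w hw ↦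
    ofReal_inv_one_sub_eq_tsum hw.1 (hw.2.trans_le h1), lintegral_tsum fun _ ↦ by fun_prop]
  simp only [lintegral_Ioo_zero_inv_mul_pow _ h0]

theorem lintegral_Ioo_zero_inv_one_sub_mul_pow (n : ℕ+) {v : ℝ} (h0 : 0 ≤ v) (h1 : v ≤ 1) :
    ∫⁻ w in Ioo 0 v, .ofReal (1 - w)⁻¹ * .ofReal (w ^ (n : ℕ)) =
      ∑' m : Ioi n, (m : ℝ≥0∞)⁻¹ * .ofReal (v ^ (m : ℕ)) := by
  have hseries (w : ℝ) (hw : w ∈ Ioo 0 v) : ENNReal.ofReal (1 - w)⁻¹ * .ofReal (w ^ (n : ℕ)) =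
      ∑' m : Ioi n, .ofReal (w⁻¹ * w ^ (m : ℕ)) := by
    have := hw.1
    rw [ofReal_inv_one_sub_eq_tsum hw.1 (hw.2.trans_le h1), ← ENNReal.tsum_mul_right,
      ← tsum_pnat_add_eq_tsum_Ioi (fun m ↦ .ofReal (w⁻¹ * w ^ (m : ℕ)))]
    refine tsum_congr fun k ↦ ?_
    rw [← ENNReal.ofReal_mul (by positivity), PNat.add_coe, pow_add]
    ring_nf
  rw [setLIntegral_congr_fun measurableSet_Ioo hseries, lintegral_tsum fun _ ↦ by fun_prop]
  exact tsum_congr fun m ↦ lintegral_Ioo_zero_inv_mul_pow m h0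

theorem lintegral_Ioo_zero_inv_one_sub_add_mul_pow {t : ℝ} (ht : 0 ≤ t) (n : ℕ+) {v : ℝ}
    (h0 : 0 ≤ v) (h1 : v ≤ 1) :
    ∫⁻ w in Ioo 0 v, .ofReal ((1 - w)⁻¹ + t * w⁻¹) * .ofReal (w ^ (n : ℕ)) =
      interpTail (.ofReal t) (fun m : ℕ+ ↦ (m : ℝ≥0∞)⁻¹ * .ofReal (v ^ (m : ℕ))) n := by
  have hsplit (w : ℝ) (hw : w ∈ Ioo 0 v) :
      ENNReal.ofReal ((1 - w)⁻¹ + t * w⁻¹) * .ofReal (w ^ (n : ℕ)) =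
        .ofReal (1 - w)⁻¹ * .ofReal (w ^ (n : ℕ)) + .ofReal t * .ofReal (w⁻¹ * w ^ (n : ℕ)) := by
    have hw0 := hw.1
    have hw1 : 0 < 1 - w := by linarith [hw.2]
    rw [ENNReal.ofReal_add (by positivity) (by positivity), add_mul, ENNReal.ofReal_mul ht,
      ENNReal.ofReal_mul (p := w⁻¹) (by positivity), mul_assoc]
  rw [setLIntegral_congr_fun measurableSet_Ioo hsplit, lintegral_add_left (by fun_prop),
    lintegral_const_mul _ (by fun_prop), lintegral_Ioo_zero_inv_one_sub_mul_pow n h0 h1,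
    lintegral_Ioo_zero_inv_mul_pow n h0, interpTail]

/-- The primitive `t log v - log (1 - v)` of the differential form `dv / (1 - v) + t dv / v`. -/
noncomputable def interpLog (t v : ℝ) : ℝ := t * Real.log v - Real.log (1 - v)

@[fun_prop]
theorem measurable_interpLog (t : ℝ) : Measurable (interpLog t) := by
  unfold interpLog
  fun_prop

theorem hasDerivAt_interpLog (t : ℝ) {v : ℝ} (h0 : 0 < v) (h1 : v < 1) :
    HasDerivAt (interpLog t) ((1 - v)⁻¹ + t * v⁻¹) v := by
  convert! ((Real.hasDerivAt_log h0.ne').const_mul t).sub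
    (((hasDerivAt_id v).const_sub 1).log (sub_pos.2 h1).ne') using 1
  simp only [id]
  ring

theorem lintegral_inv_one_sub_mul_pow_interpLog {t : ℝ} (ht : 0 ≤ t) (p : ℕ) {v : ℝ} (h0 : 0 ≤ v)
    (h1 : v < 1) :
    ∫⁻ u in Ioo 0 v, .ofReal (1 - u)⁻¹ *
        .ofReal ((interpLog t v - interpLog t u) ^ p / p.factorial) =
      ∑' n : ℕ+, interpHarmonic (.ofReal t) p n * ((n : ℝ≥0∞)⁻¹ * .ofReal (v ^ (n : ℕ))) := by
  induction p generalizing v with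
  | zero => simpa [interpHarmonic] using lintegral_Ioo_zero_inv_one_sub h0 h1.le
  | succ p ih =>
    have hnonneg (w : ℝ) (hw : w ∈ Ioo 0 v) : 0 ≤ (1 - w)⁻¹ + t * w⁻¹ := by
      have hw0 := hw.1
      have hw1 : 0 < 1 - w := by linarith [hw.2]
      positivity
    rw [lintegral_mul_pow_sub_succ (measurable_interpLog t)
      (f := fun w ↦ (1 - w)⁻¹ + t * w⁻¹) (by fun_prop) (by fun_prop)
      (fun w hw ↦ hasDerivAt_interpLog t hw.1 (hw.2.trans_lt h1)) hnonneg]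
    calc ∫⁻ w in Ioo 0 v, .ofReal ((1 - w)⁻¹ + t * w⁻¹) * ∫⁻ u in Ioo 0 w, .ofReal (1 - u)⁻¹ *
          .ofReal ((interpLog t w - interpLog t u) ^ p / p.factorial)
        = ∫⁻ w in Ioo 0 v, ∑' n : ℕ+, interpHarmonic (.ofReal t) p n * (n : ℝ≥0∞)⁻¹ *
            (.ofReal ((1 - w)⁻¹ + t * w⁻¹) * .ofReal (w ^ (n : ℕ))) := by
          refine setLIntegral_congr_fun measurableSet_Ioo fun w hw ↦ ?_
          simp only [ih hw.1.le (hw.2.trans h1), ← ENNReal.tsum_mul_left]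
          exact tsum_congr fun n ↦ by ring
      _ = ∑' n : ℕ+, interpHarmonic (.ofReal t) p n * (n : ℝ≥0∞)⁻¹ *
            interpTail (.ofReal t) (fun m : ℕ+ ↦ (m : ℝ≥0∞)⁻¹ * .ofReal (v ^ (m : ℕ))) n := by
          rw [lintegral_tsum fun n ↦ by fun_prop]
          refine tsum_congr fun n ↦ ?_
          rw [lintegral_const_mul _ (by fun_prop),
            lintegral_Ioo_zero_inv_one_sub_add_mul_pow ht n h0 h1.le]
      _ = _ := tsum_mul_interpTail _ _ _

theorem lintegral_inv_mul_pow_mul_pow_log (q : ℕ) (n : ℕ+) {v : ℝ} (hv : 0 ≤ v) :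
    ∫⁻ u in Ioo 0 v, .ofReal (u⁻¹ * u ^ (n : ℕ)) *
        .ofReal ((Real.log v - Real.log u) ^ q / q.factorial) =
      (n : ℝ≥0∞)⁻¹ ^ (q + 1) * .ofReal (v ^ (n : ℕ)) := by
  induction q generalizing v with
  | zero => simpa using lintegral_Ioo_zero_inv_mul_pow n hv
  | succ q ih =>
    rw [lintegral_mul_pow_sub_succ Real.measurable_log (f := fun w ↦ w⁻¹) (by fun_prop)
      (by fun_prop) (fun w hw ↦ Real.hasDerivAt_log hw.1.ne') (fun w hw ↦ inv_nonneg.2 hw.1.le)]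
    calc ∫⁻ w in Ioo 0 v, .ofReal w⁻¹ * ∫⁻ u in Ioo 0 w, .ofReal (u⁻¹ * u ^ (n : ℕ)) *
          .ofReal ((Real.log w - Real.log u) ^ q / q.factorial)
        = ∫⁻ w in Ioo 0 v, (n : ℝ≥0∞)⁻¹ ^ (q + 1) * .ofReal (w⁻¹ * w ^ (n : ℕ)) := by
          refine setLIntegral_congr_fun measurableSet_Ioo fun w hw ↦ ?_
          simp only [ih hw.1.le]
          rw [mul_left_comm, ← ENNReal.ofReal_mul (inv_nonneg.2 hw.1.le)]
      _ = _ := by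
          rw [lintegral_const_mul _ (by fun_prop), lintegral_Ioo_zero_inv_mul_pow n hv,
            pow_succ _ (q + 1), mul_assoc]

theorem lintegral_openTriangle_interpLog {t : ℝ} (ht : 0 ≤ t) (p q : ℕ) :
    ∫⁻ z in openTriangle 0 1, .ofReal (1 - z.1)⁻¹ *
        .ofReal ((interpLog t z.2 - interpLog t z.1) ^ p / p.factorial) *
        (.ofReal z.2⁻¹ * .ofReal ((Real.log 1 - Real.log z.2) ^ q / q.factorial)) =
      ∑' n : ℕ+, interpHarmonic (.ofReal t) p n * (n : ℝ≥0∞)⁻¹ ^ (q + 2) := by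
  set L : ℝ → ℝ≥0∞ := fun v ↦ .ofReal ((Real.log 1 - Real.log v) ^ q / q.factorial)
  have hLm : Measurable L := by fun_prop
  rw [lintegral_openTriangle_symm (by fun_prop)]
  calc ∫⁻ v in Ioo 0 1, ∫⁻ u in Ioo 0 v, .ofReal (1 - u)⁻¹ *
        .ofReal ((interpLog t v - interpLog t u) ^ p / p.factorial) * (.ofReal v⁻¹ * L v)
      = ∫⁻ v in Ioo 0 1, ∑' n : ℕ+, interpHarmonic (.ofReal t) p n * (n : ℝ≥0∞)⁻¹ *
          (.ofReal (v⁻¹ * v ^ (n : ℕ)) * L v) := by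
        refine setLIntegral_congr_fun measurableSet_Ioo fun v hv ↦ ?_
        rw [lintegral_mul_const _ (by fun_prop),
          lintegral_inv_one_sub_mul_pow_interpLog ht p hv.1.le hv.2, ← ENNReal.tsum_mul_right]
        refine tsum_congr fun n ↦ ?_
        rw [ENNReal.ofReal_mul (inv_nonneg.2 hv.1.le)]
        ring
    _ = ∑' n : ℕ+, interpHarmonic (.ofReal t) p n * (n : ℝ≥0∞)⁻¹ * (n : ℝ≥0∞)⁻¹ ^ (q + 1) := by
        rw [lintegral_tsum fun n ↦ by fun_prop]
        refine tsum_congr fun n ↦ ?_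
        rw [lintegral_const_mul _ (by fun_prop), lintegral_inv_mul_pow_mul_pow_log q n zero_le_one]
        simp
    _ = _ := tsum_congr fun n ↦ by ring

end IteratedIntegrals

section Polynomiality

open Polynomial

theorem exists_polynomial_eval_eq_integral {α : Type*} [MeasurableSpace α] {μ : Measure α}
    {f g h : α → ℝ} (hfm : AEStronglyMeasurable f μ) (hgm : AEStronglyMeasurable g μ)
    (hhm : AEStronglyMeasurable h μ) (hf : 0 ≤ᵐ[μ] f) (hg : 0 ≤ᵐ[μ] g) (hh : 0 ≤ᵐ[μ] h) (p : ℕ)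
    (hint : Integrable (fun x ↦ (f x + g x) ^ p * h x) μ) :
    ∃ Q : ℝ[X], ∀ t, Q.eval t = ∫ x, (f x + t * g x) ^ p * h x ∂μ := by
  set G : ℕ → α → ℝ := fun j x ↦ f x ^ j * g x ^ (p - j) * p.choose j * h x
  have hexpand (t : ℝ) (x : α) :
      (f x + t * g x) ^ p * h x = ∑ j ∈ Finset.range (p + 1), t ^ (p - j) * G j x := by
    rw [add_pow, Finset.sum_mul]
    exact Finset.sum_congr rfl fun j _ ↦ by rw [mul_pow]; ring
  -- At `t = 1` the integrand is a sum of the nonnegative `G j`, so it dominates each of them.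
  have hGint (j : ℕ) (hj : j ∈ Finset.range (p + 1)) : Integrable (G j) μ := by
    refine hint.mono' (by fun_prop) ?_
    filter_upwards [hf, hg, hh] with x (hfx : 0 ≤ f x) (hgx : 0 ≤ g x) (hhx : 0 ≤ h x)
    have hnonneg (j : ℕ) : 0 ≤ G j x := by positivity
    rw [Real.norm_of_nonneg (hnonneg j)]
    calc G j x ≤ ∑ i ∈ Finset.range (p + 1), G i x :=
          Finset.single_le_sum (fun i _ ↦ hnonneg i) hj
      _ = (f x + g x) ^ p * h x := by simpa using (hexpand 1 x).symm
  refine ⟨∑ j ∈ Finset.range (p + 1), X ^ (p - j) * C (∫ x, G j x ∂μ), fun t ↦ ?_⟩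
  simp only [hexpand]
  rw [integral_finsetSum _ fun j hj ↦ (hGint j hj).const_mul _]
  simp only [eval_finsetSum, eval_mul, eval_pow, eval_X, eval_C, integral_const_mul]

theorem exists_polynomial_eval_eq_zetaT (k : List ℕ) :
    ∃ P : ℝ[X], ∀ t, P.eval t = zetaT t k :=
  ⟨((fills k).map fun l ↦ X ^ (k.length - l.length) * C (mzvL l)).sum, fun t ↦ by
    simp [zetaT, eval_listSum, Function.comp_def, mul_comm (t ^ _)]⟩

end Polynomiality

section HeightOne

open Set
open scoped ENNReal

/-- The integrand of the double integral for `ζᵗ({1}ᵖ, q + 2)`, without the factor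
`1 / (p! q!)`. -/
noncomputable def heightOneIntegrand (p q : ℕ) (t : ℝ) (u : ℝ × ℝ) : ℝ :=
  (Real.log ((1 - u.1) / (1 - u.2)) + t * Real.log (u.2 / u.1)) ^ p *
    (Real.log (1 / u.2)) ^ q / ((1 - u.1) * u.2)

theorem measurable_heightOneIntegrand (p q : ℕ) (t : ℝ) :
    Measurable (heightOneIntegrand p q t) := by
  unfold heightOneIntegrand
  fun_prop

theorem log_one_sub_div_nonneg_of_mem_openTriangle {u : ℝ × ℝ} (hu : u ∈ openTriangle 0 1) :
    0 ≤ Real.log ((1 - u.1) / (1 - u.2)) := by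
  obtain ⟨_, h12, h2⟩ := hu
  exact Real.log_nonneg ((one_le_div (by linarith)).2 (by linarith))

theorem log_div_nonneg_of_mem_openTriangle {u : ℝ × ℝ} (hu : u ∈ openTriangle 0 1) :
    0 ≤ Real.log (u.2 / u.1) :=
  Real.log_nonneg ((one_le_div hu.1).2 hu.2.1.le)

theorem log_add_mul_log_nonneg_of_mem_openTriangle {t : ℝ} (ht : 0 ≤ t) {u : ℝ × ℝ}
    (hu : u ∈ openTriangle 0 1) :
    0 ≤ Real.log ((1 - u.1) / (1 - u.2)) + t * Real.log (u.2 / u.1) :=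
  add_nonneg (log_one_sub_div_nonneg_of_mem_openTriangle hu)
    (mul_nonneg ht (log_div_nonneg_of_mem_openTriangle hu))

theorem log_pow_div_nonneg_of_mem_openTriangle (q : ℕ) {u : ℝ × ℝ} (hu : u ∈ openTriangle 0 1) :
    0 ≤ Real.log (1 / u.2) ^ q / ((1 - u.1) * u.2) := by
  obtain ⟨h1, h12, h2⟩ := hu
  have hlog : 0 ≤ Real.log (1 / u.2) := Real.log_nonneg ((one_le_div (by linarith)).2 h2.le)
  exact div_nonneg (pow_nonneg hlog q) (mul_nonneg (by linarith) (by linarith))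

theorem heightOneIntegrand_nonneg (p q : ℕ) {t : ℝ} (ht : 0 ≤ t) {u : ℝ × ℝ}
    (hu : u ∈ openTriangle 0 1) : 0 ≤ heightOneIntegrand p q t u := by
  rw [heightOneIntegrand, mul_div_assoc]
  exact mul_nonneg (pow_nonneg (log_add_mul_log_nonneg_of_mem_openTriangle ht hu) p)
    (log_pow_div_nonneg_of_mem_openTriangle q hu)

theorem interpLog_sub_interpLog (t : ℝ) {u : ℝ × ℝ} (hu : u ∈ openTriangle 0 1) :
    interpLog t u.2 - interpLog t u.1 =
      Real.log ((1 - u.1) / (1 - u.2)) + t * Real.log (u.2 / u.1) := by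
  obtain ⟨h1, h12, h2⟩ := hu
  rw [Real.log_div (by linarith) (by linarith), Real.log_div (by linarith) h1.ne']
  unfold interpLog
  ring

theorem lintegral_heightOneIntegrand (p q : ℕ) {t : ℝ} (ht : 0 ≤ t) :
    ∫⁻ u in openTriangle 0 1,
        .ofReal (1 / (p.factorial * q.factorial) * heightOneIntegrand p q t u) =
      ∑' n : ℕ+, interpHarmonic (.ofReal t) p n * (n : ℝ≥0∞)⁻¹ ^ (q + 2) := by
  rw [← lintegral_openTriangle_interpLog ht]
  refine setLIntegral_congr_fun (measurableSet_openTriangle 0 1) fun u hu ↦ ?_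
  have hinner : 0 ≤ interpLog t u.2 - interpLog t u.1 := by
    rw [interpLog_sub_interpLog t hu]
    exact log_add_mul_log_nonneg_of_mem_openTriangle ht hu
  have hu2 : 0 < u.2 := hu.1.trans hu.2.1
  have hu1 : 0 < 1 - u.1 := by linarith [hu.2.1, hu.2.2]
  rw [← ENNReal.ofReal_mul (by positivity), ← ENNReal.ofReal_mul (by positivity),
    ← ENNReal.ofReal_mul (by positivity), heightOneIntegrand, ← interpLog_sub_interpLog t hu,
    Real.log_div one_ne_zero hu2.ne']
  congr 1
  field

theorem heightOneIntegrand_nonneg_ae (p q : ℕ) {t : ℝ} (ht : 0 ≤ t) :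
    0 ≤ᵐ[volume.restrict (openTriangle 0 1)] heightOneIntegrand p q t :=
  ae_restrict_of_forall_mem (measurableSet_openTriangle 0 1) fun _ ↦
    heightOneIntegrand_nonneg p q ht

theorem integrableOn_heightOneIntegrand (p q : ℕ) {t : ℝ} (ht : 0 ≤ t) :
    IntegrableOn (heightOneIntegrand p q t) (openTriangle 0 1) := by
  have hfactor : (0 : ℝ) < 1 / (p.factorial * q.factorial) := by positivity
  refine (integrable_const_mul_iff hfactor.ne'.isUnit _).1 <|
    (lintegral_ofReal_ne_top_iff_integrable
      ((measurable_heightOneIntegrand p q t).const_mul _).aestronglyMeasurable ?_).1 ?_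
  · filter_upwards [heightOneIntegrand_nonneg_ae p q ht] with u hu
    exact mul_nonneg hfactor.le hu
  · rw [lintegral_heightOneIntegrand p q ht]
    exact tsum_interpHarmonic_mul_inv_pow_ne_top ht p (Nat.le_add_left 2 q)

theorem zetaT_replicate_one_of_nonneg (p q : ℕ) {t : ℝ} (ht : 0 ≤ t) :
    zetaT t (List.replicate p 1 ++ [q + 2]) =
      1 / (p.factorial * q.factorial) * ∫ u in openTriangle 0 1, heightOneIntegrand p q t u := by
  have hsum := tsum_nestedSum_replicate_one (.ofReal t) p (q + 2)
  rw [zetaT_eq_toReal_tsum_nestedSum ht (by simp) (hsum ▸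
      tsum_interpHarmonic_mul_inv_pow_ne_top ht p (Nat.le_add_left 2 q)), hsum,
    ← lintegral_heightOneIntegrand p q ht, ← integral_const_mul, integral_eq_lintegral_of_nonneg_ae]
  · filter_upwards [heightOneIntegrand_nonneg_ae p q ht] with u hu
    exact mul_nonneg (by positivity) hu
  · exact ((measurable_heightOneIntegrand p q t).const_mul _).aestronglyMeasurable

theorem exists_polynomial_eval_eq_integral_heightOneIntegrand (p q : ℕ) :
    ∃ Q : Polynomial ℝ, ∀ t, Q.eval t = ∫ u in openTriangle 0 1, heightOneIntegrand p q t u := by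
  have hT := measurableSet_openTriangle 0 1
  have hint := integrableOn_heightOneIntegrand p q zero_le_one
  unfold heightOneIntegrand at hint ⊢
  simp only [one_mul, mul_div_assoc] at hint ⊢
  exact exists_polynomial_eval_eq_integral
    (Measurable.aestronglyMeasurable (by fun_prop))
    (Measurable.aestronglyMeasurable (by fun_prop))
    (Measurable.aestronglyMeasurable (by fun_prop))
    (ae_restrict_of_forall_mem hT fun _ hu ↦ log_one_sub_div_nonneg_of_mem_openTriangle hu)
    (ae_restrict_of_forall_mem hT fun _ hu ↦ log_div_nonneg_of_mem_openTriangle hu)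
    (ae_restrict_of_forall_mem hT fun _ hu ↦ log_pow_div_nonneg_of_mem_openTriangle q hu) p hint

end HeightOne

theorem stmt10 (p q : ℕ) (t : ℝ) :
    zetaT t (List.replicate p 1 ++ [q + 2]) =
      (1 / ((Nat.factorial p : ℝ) * (Nat.factorial q : ℝ))) *
        ∫ u in {u : ℝ × ℝ | 0 < u.1 ∧ u.1 < u.2 ∧ u.2 < 1},
          (Real.log ((1 - u.1) / (1 - u.2)) + t * Real.log (u.2 / u.1)) ^ p *
            (Real.log (1 / u.2)) ^ q / ((1 - u.1) * u.2) := by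
  obtain ⟨P, hP⟩ := exists_polynomial_eval_eq_zetaT (List.replicate p 1 ++ [q + 2])
  obtain ⟨Q, hQ⟩ := exists_polynomial_eval_eq_integral_heightOneIntegrand p q
  have hPQ : P = Polynomial.C (1 / (p.factorial * q.factorial : ℝ)) * Q := by
    refine Polynomial.eq_of_infinite_eval_eq _ _ ((Set.Ici_infinite (0 : ℝ)).mono fun s hs ↦ ?_)
    simpa [hP, hQ] using zetaT_replicate_one_of_nonneg p q hs
  rw [← hP, hPQ, Polynomial.eval_C_mul, hQ]
  rfl
end
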